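/- arXiv:math/0404169 — 3 statements merged into one kernel-verified Lean document; each statement's English description precedes it below -/
import Mathlib

section
/- For six general points in ℙ², there is no nonzero plane curve of degree 14 with multiplicity at least 6 at each of the six points; i.e. ℓ(L(14, 0, 6^6)) = −1. Consequently ℓ(L(14, m_0, 6^6)) = −1 for every m_0 ≥ 0 when a seventh general point p_0 is added. -/
open MvPolynomial

/-- The iterated partial derivative corresponding to the multi-index `ν`. -/
noncomputable def mderiv (ν : Fin 3 → ℕ) :
    MvPolynomial (Fin 3) ℂ →ₗ[ℂ] MvPolynomial (Fin 3) ℂ :=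
  ((pderiv (R := ℂ) (0 : Fin 3)).toLinearMap ^ ν 0) ∘ₗ
  ((pderiv (R := ℂ) (1 : Fin 3)).toLinearMap ^ ν 1) ∘ₗ
  ((pderiv (R := ℂ) (2 : Fin 3)).toLinearMap ^ ν 2)

/-- The linear system `L(d; m)` of homogeneous forms of degree `d` in three variables
all of whose partial derivatives of order `< m i` vanish at the point `p i`,
i.e. plane curves of degree `d` with multiplicity at least `m i` at `p i`. -/
noncomputable def linSys {k : ℕ} (p : Fin k → Fin 3 → ℂ) (d : ℕ) (m : Fin k → ℕ) :
    Submodule ℂ (MvPolynomial (Fin 3) ℂ) :=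
  (homogeneousSubmodule (Fin 3) ℂ d) ⊓
    ⨅ (i : Fin k), ⨅ (ν : Fin 3 → ℕ), ⨅ (_ : ν 0 + ν 1 + ν 2 < m i),
      LinearMap.ker ((aeval (p i)).toLinearMap ∘ₗ mderiv ν)

/-- The projective dimension `ℓ` of the linear system (`-1` means empty). -/
noncomputable def projDim {k : ℕ} (p : Fin k → Fin 3 → ℂ) (d : ℕ) (m : Fin k → ℕ) : ℤ :=
  (Module.finrank ℂ (linSys p d m) : ℤ) - 1

/-- The virtual dimension `v = d(d+3)/2 - ∑ mᵢ(mᵢ+1)/2`. -/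
def virtDim {k : ℕ} (d : ℕ) (m : Fin k → ℕ) : ℤ :=
  ((d : ℤ) * (d + 3)) / 2 - ∑ i : Fin k, ((m i : ℤ) * (m i + 1)) / 2

/-- The quasi-homogeneous multiplicity vector `(m₀, 6, …, 6)` on `n + 1` points. -/
def qh (n m0 : ℕ) : Fin (n + 1) → ℕ := fun i => if i = 0 then m0 else 6

/-- A property `Q` of configurations of `k` points of `ℙ²` (given by nonzero homogeneous
coordinate vectors) holds for points in general position: there is a nonzero polynomial
in the coordinates such that `Q` holds whenever it does not vanish. -/
def Generically (k : ℕ) (Q : (Fin k → Fin 3 → ℂ) → Prop) : Prop :=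
  ∃ P : MvPolynomial (Fin k × Fin 3) ℂ, P ≠ 0 ∧
    ∀ p : Fin k → Fin 3 → ℂ, (∀ i, p i ≠ 0) →
      eval (fun x => p x.1 x.2) P ≠ 0 → Q p

theorem pderiv_pderiv_comm {σ R : Type*} [CommRing R] (i j : σ) (F : MvPolynomial σ R) :
    pderiv i (pderiv j F) = pderiv j (pderiv i F) := by
  classical
  have h : ⁅pderiv (R := R) i, pderiv (R := R) j⁆ = 0 := by
    apply MvPolynomial.derivation_ext
    intro l
    rw [Derivation.commutator_apply]
    simp [pderiv_X, Pi.single_apply, apply_ite]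
  have := congrArg (fun D => D F) h
  simpa [Derivation.commutator_apply, sub_eq_zero] using this

theorem mderiv_pderiv (ν : Fin 3 → ℕ) (i : Fin 3) (F : MvPolynomial (Fin 3) ℂ) :
    mderiv ν (pderiv i F) = mderiv (ν + Pi.single i 1) F := by
  have hc (a b : Fin 3) : Commute (pderiv (R := ℂ) a).toLinearMap (pderiv b).toLinearMap :=
    LinearMap.ext fun F => pderiv_pderiv_comm a b F
  have h : mderiv ν * (pderiv (R := ℂ) i).toLinearMap = mderiv (ν + Pi.single i 1) := by
    simp only [mderiv, ← Module.End.mul_eq_comp]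
    fin_cases i
    · simp [pow_succ, mul_assoc]
      simp [← mul_assoc, ((hc 0 1).pow_right (ν 1)).eq]
      simp [mul_assoc, ((hc 0 2).pow_right (ν 2)).eq]
    · simp [pow_succ, mul_assoc, ((hc 1 2).pow_right (ν 2)).eq]
    · simp [pow_succ, mul_assoc]
  exact LinearMap.congr_fun h F

/-- The expansion `F(p + t v)`, a polynomial in `t` over the ring of polynomials in `v`. -/
noncomputable def expandAt (p : Fin 3 → ℂ) :
    MvPolynomial (Fin 3) ℂ →ₐ[ℂ] Polynomial (MvPolynomial (Fin 3) ℂ) :=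
  aeval fun i => Polynomial.C (C (p i)) + Polynomial.X * Polynomial.C (X i)

theorem derivative_expandAt (p : Fin 3 → ℂ) (F : MvPolynomial (Fin 3) ℂ) :
    Polynomial.derivative (expandAt p F) = ∑ i, Polynomial.C (X i) * expandAt p (pderiv i F) := by
  induction F using MvPolynomial.induction_on with
  | C a =>
    simp only [expandAt, aeval_C, pderiv_C, map_zero, mul_zero, Finset.sum_const_zero]
    rw [IsScalarTower.algebraMap_apply ℂ (MvPolynomial (Fin 3) ℂ)
      (Polynomial (MvPolynomial (Fin 3) ℂ)), Polynomial.algebraMap_eq, Polynomial.derivative_C]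
  | add F G hF hG => simp [hF, hG, mul_add, Finset.sum_add_distrib]
  | mul_X F j hF =>
    have hX : Polynomial.derivative (expandAt p (X j)) = Polynomial.C (X j) := by simp [expandAt]
    rw [map_mul, Polynomial.derivative_mul, hF, hX, Finset.sum_mul]
    have (i : Fin 3) : Polynomial.C (X i) * expandAt p (pderiv i (F * X j)) =
        Polynomial.C (X i) * expandAt p (pderiv i F) * expandAt p (X j) +
          if i = j then expandAt p F * Polynomial.C (X j) else 0 := by
      rw [Derivation.leibniz, pderiv_X]
      by_cases h : i = j
      · subst h; simp; ring
      · simp [h]; ring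
    rw [Finset.sum_congr rfl fun i _ => this i, Finset.sum_add_distrib]
    simp

theorem coeff_zero_expandAt (p : Fin 3 → ℂ) (F : MvPolynomial (Fin 3) ℂ) :
    (expandAt p F).coeff 0 = C (aeval p F) := by
  have h : ((Polynomial.aeval (0 : MvPolynomial (Fin 3) ℂ)).restrictScalars ℂ).comp (expandAt p) =
      (Algebra.ofId ℂ (MvPolynomial (Fin 3) ℂ)).comp (aeval p) := by
    apply MvPolynomial.algHom_ext
    intro i
    simp [expandAt, Algebra.ofId_apply, algebraMap_eq]
  have := DFunLike.congr_fun h F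
  simpa [Algebra.ofId_apply, algebraMap_eq, Polynomial.coeff_zero_eq_aeval_zero] using this

theorem X_pow_succ_dvd_of_derivative {R : Type*} [CommRing R] [IsDomain R] [CharZero R]
    {f : Polynomial R} {m : ℕ} (h0 : f.coeff 0 = 0)
    (h : Polynomial.X ^ m ∣ Polynomial.derivative f) : Polynomial.X ^ (m + 1) ∣ f := by
  rw [Polynomial.X_pow_dvd_iff] at h ⊢
  intro n hn
  cases n with
  | zero => exact h0
  | succ n =>
    have := h n (by omega)
    rw [Polynomial.coeff_derivative] at this
    exact (mul_eq_zero.1 this).resolve_right (by exact_mod_cast n.succ_ne_zero)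

theorem X_pow_dvd_expandAt {p : Fin 3 → ℂ} {m : ℕ} {F : MvPolynomial (Fin 3) ℂ}
    (h : ∀ ν : Fin 3 → ℕ, ν 0 + ν 1 + ν 2 < m → aeval p (mderiv ν F) = 0) :
    Polynomial.X ^ m ∣ expandAt p F := by
  induction m generalizing F with
  | zero => simp
  | succ m ih =>
    apply X_pow_succ_dvd_of_derivative
    · have := h 0 (by simp)
      rw [coeff_zero_expandAt]
      simpa [mderiv] using this
    · rw [derivative_expandAt]
      refine Finset.dvd_sum fun i _ => Dvd.dvd.mul_left (ih fun ν hν => ?_) _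
      rw [mderiv_pderiv]
      apply h
      fin_cases i <;> simp <;> omega

theorem degree_of_mem_support {d : ℕ} {F : MvPolynomial (Fin 3) ℂ} (hF : F.IsHomogeneous d)
    {e : Fin 3 →₀ ℕ} (he : e ∈ F.support) : e.degree = d := by
  by_contra h
  exact mem_support_iff.1 he (hF.coeff_eq_zero h)

theorem aeval_mul_of_isHomogeneous {S : Type*} [CommRing S] [Algebra ℂ S] {d : ℕ}
    {F : MvPolynomial (Fin 3) ℂ} (hF : F.IsHomogeneous d) (a : S) (g : Fin 3 → S) :
    aeval (fun i => a * g i) F = a ^ d * aeval g F := by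
  rw [aeval_def, aeval_def, eval₂_eq', eval₂_eq', Finset.mul_sum]
  refine Finset.sum_congr rfl fun e he => ?_
  rw [← degree_of_mem_support hF he, Finsupp.degree_eq_sum]
  simp only [Fin.sum_univ_three, Fin.prod_univ_three]
  ring

/-- The linear change of coordinates `F(x) ↦ F(M x)`. -/
noncomputable def linSubst (M : Matrix (Fin 3) (Fin 3) ℂ) :
    MvPolynomial (Fin 3) ℂ →ₐ[ℂ] MvPolynomial (Fin 3) ℂ :=
  aeval fun i => ∑ j, C (M i j) * X j

theorem linSubst_isHomogeneous (M : Matrix (Fin 3) (Fin 3) ℂ) {d : ℕ}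
    {F : MvPolynomial (Fin 3) ℂ} (hF : F.IsHomogeneous d) : (linSubst M F).IsHomogeneous d := by
  have := hF.aeval (n := 1) (fun i => ∑ j, C (M i j) * X j)
    fun i => IsHomogeneous.sum _ _ _ fun j _ => isHomogeneous_C_mul_X _ _
  simpa [linSubst] using this

theorem linSubst_linSubst {M N : Matrix (Fin 3) (Fin 3) ℂ} (h : M * N = 1)
    (F : MvPolynomial (Fin 3) ℂ) : linSubst N (linSubst M F) = F := by
  have h' : (linSubst N).comp (linSubst M) = AlgHom.id ℂ _ := by
    apply MvPolynomial.algHom_ext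
    intro i
    have hj (j : Fin 3) : ∑ l, M i l * N l j = (1 : Matrix (Fin 3) (Fin 3) ℂ) i j := by
      rw [← h, Matrix.mul_apply]
    have : ∑ j, C (σ := Fin 3) (∑ l, M i l * N l j) * X j = X i := by
      simp [hj, Matrix.one_apply]
    simp only [linSubst, AlgHom.comp_apply, aeval_X, map_sum, map_mul, algHom_C, algebraMap_eq,
      AlgHom.id_apply]
    rw [← this]
    simp only [Fin.sum_univ_three, map_add, map_mul]
    ring
  exact DFunLike.congr_fun h' F

/-- The restriction of a form to the conic parametrized by `t ↦ M (1, t, t²)`. -/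
noncomputable def conicRestrict (M : Matrix (Fin 3) (Fin 3) ℂ) :
    MvPolynomial (Fin 3) ℂ →ₐ[ℂ] Polynomial ℂ :=
  aeval fun i => Polynomial.C (M i 0) + Polynomial.C (M i 1) * Polynomial.X +
    Polynomial.C (M i 2) * Polynomial.X ^ 2

theorem aeval_linSubst (M : Matrix (Fin 3) (Fin 3) ℂ) (F : MvPolynomial (Fin 3) ℂ) :
    aeval ![1, Polynomial.X, Polynomial.X ^ 2] (linSubst M F) = conicRestrict M F := by
  have h : (aeval ![1, Polynomial.X, Polynomial.X ^ 2]).comp (linSubst M) = conicRestrict M := by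
    apply MvPolynomial.algHom_ext
    intro i
    simp [linSubst, conicRestrict, Fin.sum_univ_three]
  exact DFunLike.congr_fun h F

theorem natDegree_conicRestrict_le (M : Matrix (Fin 3) (Fin 3) ℂ) {d : ℕ}
    {F : MvPolynomial (Fin 3) ℂ} (hF : F.IsHomogeneous d) :
    (conicRestrict M F).natDegree ≤ 2 * d := by
  rw [conicRestrict, aeval_def, eval₂_eq']
  refine Polynomial.natDegree_sum_le_of_forall_le _ _ fun e he => ?_
  have := degree_of_mem_support hF he
  rw [Finsupp.degree_eq_sum] at this
  have hq (i : Fin 3) : (Polynomial.C (M i 0) + Polynomial.C (M i 1) * Polynomial.X +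
      Polynomial.C (M i 2) * Polynomial.X ^ 2).natDegree ≤ 2 := by compute_degree
  rw [Polynomial.algebraMap_eq]
  refine (Polynomial.natDegree_C_mul_le _ _).trans ((Polynomial.natDegree_prod_le _ _).trans ?_)
  calc _ ≤ ∑ i, e i * 2 := Finset.sum_le_sum fun i _ =>
          Polynomial.natDegree_pow_le.trans (Nat.mul_le_mul_left _ (hq i))
    _ = 2 * d := by rw [← Finset.sum_mul, this, mul_comm]

theorem sub_pow_dvd_conicRestrict {M : Matrix (Fin 3) (Fin 3) ℂ} {p : Fin 3 → ℂ} {t c : ℂ}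
    {d m : ℕ} {F : MvPolynomial (Fin 3) ℂ} (hF : F.IsHomogeneous d) (hc : c ≠ 0)
    (hM : ∀ j, M j 0 + M j 1 * t + M j 2 * t ^ 2 = c * p j)
    (h : Polynomial.X ^ m ∣ expandAt p F) :
    (Polynomial.X - Polynomial.C t) ^ m ∣ conicRestrict M F := by
  let w (j : Fin 3) : Polynomial ℂ :=
    Polynomial.C (c⁻¹ * (M j 1 + t * M j 2 + t * M j 2)) + Polynomial.C (c⁻¹ * M j 2) * Polynomial.X
  have hw : aeval (fun i => Polynomial.C (p i) + Polynomial.X * w i) F =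
      Polynomial.eval₂ (aeval w : MvPolynomial (Fin 3) ℂ →ₐ[ℂ] _).toRingHom Polynomial.X
        (expandAt p F) := by
    have : aeval (fun i => Polynomial.C (p i) + Polynomial.X * w i) =
        (Polynomial.eval₂AlgHom (aeval w : MvPolynomial (Fin 3) ℂ →ₐ[ℂ] _) Polynomial.X
          (fun _ => Commute.all _ _)).comp (expandAt p) := by
      apply MvPolynomial.algHom_ext
      intro i
      simp only [AlgHom.comp_apply, expandAt, aeval_X, map_add, map_mul]
      simp
    rw [this]
    rfl
  have hcomp : (conicRestrict M F).comp (Polynomial.X + Polynomial.C t) =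
      Polynomial.C c ^ d * aeval (fun i => Polynomial.C (p i) + Polynomial.X * w i) F := by
    rw [← aeval_mul_of_isHomogeneous hF]
    have : (Polynomial.aeval (R := ℂ) (Polynomial.X + Polynomial.C t)).comp (conicRestrict M) =
        aeval fun i => Polynomial.C c * (Polynomial.C (p i) + Polynomial.X * w i) := by
      apply MvPolynomial.algHom_ext
      intro i
      have hi : Polynomial.C c * (Polynomial.C (p i) + Polynomial.X * w i) =
          Polynomial.C (c * p i) + Polynomial.X * (Polynomial.C (M i 1 + t * M i 2 + t * M i 2) +
            Polynomial.C (M i 2) * Polynomial.X) := by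
        have h : Polynomial.C c * Polynomial.C c⁻¹ = 1 := by
          rw [← Polynomial.C_mul, mul_inv_cancel₀ hc, Polynomial.C_1]
        simp only [w, Polynomial.C_mul, Polynomial.C_add]
        linear_combination Polynomial.X * (Polynomial.C (M i 1) + Polynomial.C t *
          Polynomial.C (M i 2) + Polynomial.C t * Polynomial.C (M i 2) +
          Polynomial.C (M i 2) * Polynomial.X) * h
      rw [aeval_X, hi, ← hM]
      simp [conicRestrict]
      ring
    exact DFunLike.congr_fun this F
  have h1 : Polynomial.X ^ m ∣ (conicRestrict M F).comp (Polynomial.X + Polynomial.C t) := by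
    rw [hcomp, hw]
    apply Dvd.dvd.mul_left
    simpa using Polynomial.eval₂_dvd (aeval w : MvPolynomial (Fin 3) ℂ →ₐ[ℂ] _).toRingHom
      Polynomial.X h
  obtain ⟨q, hq⟩ := h1
  refine ⟨q.comp (Polynomial.X - Polynomial.C t), ?_⟩
  have := congrArg (fun f => f.comp (Polynomial.X - Polynomial.C t)) hq
  simpa [Polynomial.comp_assoc] using this

/-- The standard conic `x z = y²`, parametrized by `(1, t, t²)`. -/
noncomputable def stdConic : MvPolynomial (Fin 3) ℂ := X 0 * X 2 - X 1 ^ 2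

theorem stdConic_isHomogeneous : stdConic.IsHomogeneous 2 :=
  ((isHomogeneous_X ℂ 0).mul (isHomogeneous_X ℂ 2)).sub (isHomogeneous_X_pow 1 2)

theorem stdConic_dvd_sub (a b c : ℕ) :
    stdConic ∣ X 0 ^ a * X 1 ^ b * X 2 ^ c -
      X 0 ^ (a + b / 2) * X 1 ^ (b % 2) * X 2 ^ (b / 2 + c) := by
  have h : stdConic ∣ (X 1 ^ 2) ^ (b / 2) - (X 0 * X 2) ^ (b / 2) :=
    (dvd_sub_comm.1 dvd_rfl).trans (sub_dvd_pow_sub_pow _ _ _)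
  have hb : (X 1 : MvPolynomial (Fin 3) ℂ) ^ b = (X 1 ^ 2) ^ (b / 2) * X 1 ^ (b % 2) := by
    rw [← pow_mul, ← pow_add, Nat.div_add_mod]
  rw [hb]
  convert h.mul_left (X 0 ^ a * X 1 ^ (b % 2) * X 2 ^ c) using 1
  ring

theorem stdConic_dvd_of_aeval_eq_zero {d : ℕ} {H : MvPolynomial (Fin 3) ℂ}
    (hH : H.IsHomogeneous d)
    (h0 : aeval ![(1 : Polynomial ℂ), Polynomial.X, Polynomial.X ^ 2] H = 0) : stdConic ∣ H := by
  let L : Polynomial ℂ →ₗ[ℂ] MvPolynomial (Fin 3) ℂ := Polynomial.lsum fun e =>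
    LinearMap.toSpanSingleton ℂ _
      (X 0 ^ (d - e / 2 - e % 2) * X 1 ^ (e % 2) * X 2 ^ (e / 2))
  have key : stdConic ∣ H - L (aeval ![(1 : Polynomial ℂ), Polynomial.X, Polynomial.X ^ 2] H) := by
    nth_rw 1 [H.as_sum]
    rw [H.as_sum, map_sum, map_sum, ← H.as_sum, ← Finset.sum_sub_distrib]
    refine Finset.dvd_sum fun e he => ?_
    have hd := degree_of_mem_support hH he
    rw [Finsupp.degree_eq_sum, Fin.sum_univ_three] at hd
    have h1 : aeval ![(1 : Polynomial ℂ), Polynomial.X, Polynomial.X ^ 2]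
        (monomial e (coeff e H)) = Polynomial.monomial (e 1 + 2 * e 2) (coeff e H) := by
      rw [aeval_monomial, Finsupp.prod_fintype _ _ (by simp), Fin.prod_univ_three,
        ← Polynomial.C_mul_X_pow_eq_monomial]
      simp [pow_add, pow_mul]
    have h2 : monomial e (coeff e H) = C (coeff e H) * (X 0 ^ e 0 * X 1 ^ e 1 * X 2 ^ e 2) := by
      rw [monomial_eq, Finsupp.prod_fintype _ _ (by simp), Fin.prod_univ_three]
    have h3 : L (Polynomial.monomial (e 1 + 2 * e 2) (coeff e H)) = C (coeff e H) *
        (X 0 ^ (e 0 + e 1 / 2) * X 1 ^ (e 1 % 2) * X 2 ^ (e 1 / 2 + e 2)) := by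
      have e1 : (e 1 + 2 * e 2) % 2 = e 1 % 2 := by omega
      have e2 : (e 1 + 2 * e 2) / 2 = e 1 / 2 + e 2 := by omega
      have e3 : d - (e 1 / 2 + e 2) - e 1 % 2 = e 0 + e 1 / 2 := by omega
      simp [L, Polynomial.lsum_apply, Polynomial.sum_monomial_index, e1, e2, e3, smul_eq_C_mul]
    rw [h1, h2, h3, ← mul_sub]
    exact (stdConic_dvd_sub _ _ _).mul_left _
  simpa [h0] using key

theorem exists_isHomogeneous_of_dvd {a d : ℕ} {A F : MvPolynomial (Fin 3) ℂ}
    (hA : A.IsHomogeneous a) (hF : F.IsHomogeneous (a + d)) (h : A ∣ F) :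
    ∃ G : MvPolynomial (Fin 3) ℂ, G.IsHomogeneous d ∧ F = A * G := by
  let _ := gradedAlgebra (σ := Fin 3) (R := ℂ)
  obtain ⟨G, rfl⟩ := h
  refine ⟨_, (DirectSum.decompose (homogeneousSubmodule (Fin 3) ℂ) G d).2, ?_⟩
  rw [← DirectSum.coe_decompose_mul_add_of_left_mem (homogeneousSubmodule (Fin 3) ℂ) hA,
    DirectSum.decompose_of_mem_same (homogeneousSubmodule (Fin 3) ℂ) hF]

theorem pow_sub_one_dvd_of_dvd_mul {R : Type*} [CommRing R] [IsDomain R] {x a b : R}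
    (hx : Prime x) {m : ℕ} (ha : ¬ x ^ 2 ∣ a) (h : x ^ m ∣ a * b) : x ^ (m - 1) ∣ b := by
  cases m with
  | zero => simp
  | succ m =>
    by_cases hxa : x ∣ a
    · obtain ⟨a', rfl⟩ := hxa
      have ha' : ¬ x ∣ a' := fun h' => ha (by rw [pow_two]; exact mul_dvd_mul_left x h')
      rw [pow_succ', mul_assoc] at h
      exact hx.pow_dvd_of_dvd_mul_left m ha' ((mul_dvd_mul_iff_left hx.ne_zero).1 h)
    · exact (pow_dvd_pow _ (by omega)).trans (hx.pow_dvd_of_dvd_mul_left (m + 1) hxa h)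

theorem not_X_dvd_expandAt {p : Fin 3 → ℂ} {F : MvPolynomial (Fin 3) ℂ} (h : aeval p F ≠ 0) :
    ¬ Polynomial.X ∣ expandAt p F := by
  rw [Polynomial.X_dvd_iff, coeff_zero_expandAt]
  simpa using h

theorem aeval_linSubst_apply (N : Matrix (Fin 3) (Fin 3) ℂ) (p : Fin 3 → ℂ)
    (F : MvPolynomial (Fin 3) ℂ) : aeval p (linSubst N F) = aeval (N.mulVec p) F := by
  have h : (aeval p).comp (linSubst N) = aeval (N.mulVec p) := by
    apply MvPolynomial.algHom_ext
    intro i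
    simp [linSubst, Matrix.mulVec, dotProduct]
  exact DFunLike.congr_fun h F

/-- A conic through `p` which is projectively equivalent to `x z = y²` is smooth at `p`. -/
theorem not_X_sq_dvd_expandAt {M N : Matrix (Fin 3) (Fin 3) ℂ} (hNM : N * M = 1) {p : Fin 3 → ℂ}
    (hp : N.mulVec p 0 ≠ 0) : ¬ Polynomial.X ^ 2 ∣ expandAt p (linSubst N stdConic) := by
  let u : Fin 3 → ℂ := fun i => M i 2
  intro h
  have h1 : Polynomial.X ^ 2 ∣ Polynomial.map (aeval u : MvPolynomial (Fin 3) ℂ →ₐ[ℂ] ℂ).toRingHom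
      (expandAt p (linSubst N stdConic)) := by
    simpa using Polynomial.map_dvd (aeval u : MvPolynomial (Fin 3) ℂ →ₐ[ℂ] ℂ).toRingHom h
  have hr (i : Fin 3) : N i 0 * u 0 + N i 1 * u 1 + N i 2 * u 2 =
      (1 : Matrix (Fin 3) (Fin 3) ℂ) i 2 := by
    rw [← hNM, Matrix.mul_apply, Fin.sum_univ_three]
  have hv (i : Fin 3) : Polynomial.map (aeval u : MvPolynomial (Fin 3) ℂ →ₐ[ℂ] ℂ).toRingHom
      (expandAt p (linSubst N (X i))) = Polynomial.C (N.mulVec p i) +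
        Polynomial.C ((1 : Matrix (Fin 3) (Fin 3) ℂ) i 2) * Polynomial.X := by
    rw [← hr]
    simp [linSubst, expandAt, Matrix.mulVec, dotProduct, Fin.sum_univ_three, algebraMap_eq]
    ring
  rw [Polynomial.X_pow_dvd_iff] at h1
  have := h1 1 (by norm_num)
  rw [stdConic] at this
  simp only [map_sub, map_mul, map_pow, Polynomial.map_sub, Polynomial.map_mul,
    Polynomial.map_pow, hv] at this
  simp [Polynomial.coeff_X, pow_two] at this
  exact hp this

theorem exists_conic_factor {ι : Type*} [Fintype ι] [DecidableEq ι] {p : ι → Fin 3 → ℂ}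
    {M N : Matrix (Fin 3) (Fin 3) ℂ} (hMN : M * N = 1) {t c : ι → ℂ} {k : ι}
    (ht : ∀ i ≠ k, ∀ j ≠ k, t i = t j → i = j) (hc : ∀ i ≠ k, c i ≠ 0)
    (hM : ∀ i ≠ k, ∀ j, M j 0 + M j 1 * t i + M j 2 * t i ^ 2 = c i * p i j)
    (hk : aeval (N.mulVec (p k)) stdConic ≠ 0) {d : ℕ} {m : ι → ℕ}
    {F : MvPolynomial (Fin 3) ℂ} (hF : F.IsHomogeneous (2 + d))
    (hm : ∀ i, Polynomial.X ^ m i ∣ expandAt (p i) F)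
    (hd : 2 * (2 + d) < ∑ i ∈ Finset.univ.erase k, m i) :
    ∃ G : MvPolynomial (Fin 3) ℂ, G.IsHomogeneous d ∧
      (∀ i, Polynomial.X ^ (if i = k then m i else m i - 1) ∣ expandAt (p i) G) ∧
      (G = 0 → F = 0) := by
  have hNM : N * M = 1 := mul_eq_one_comm.1 hMN
  have h0 : conicRestrict M F = 0 := by
    have hdvd : ∏ i ∈ Finset.univ.erase k, (Polynomial.X - Polynomial.C (t i)) ^ m i ∣
        conicRestrict M F := by
      refine Finset.prod_dvd_of_coprime (fun i hi j hj hij => ?_) fun i hi =>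
        sub_pow_dvd_conicRestrict hF (hc i (Finset.ne_of_mem_erase hi))
          (hM i (Finset.ne_of_mem_erase hi)) (hm i)
      refine IsCoprime.pow (Polynomial.isCoprime_X_sub_C_of_isUnit_sub ?_)
      rw [isUnit_iff_ne_zero, sub_ne_zero]
      exact fun h => hij (ht i (Finset.ne_of_mem_erase hi) j (Finset.ne_of_mem_erase hj) h)
    refine Polynomial.eq_zero_of_dvd_of_natDegree_lt hdvd
      ((natDegree_conicRestrict_le M hF).trans_lt ?_)
    rw [Polynomial.natDegree_prod_of_monic _ _ fun i _ => (Polynomial.monic_X_sub_C _).pow _]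
    simpa using hd
  obtain ⟨G', hG', hFG⟩ := exists_isHomogeneous_of_dvd stdConic_isHomogeneous
    (linSubst_isHomogeneous M hF)
    (stdConic_dvd_of_aeval_eq_zero (linSubst_isHomogeneous M hF) (by rw [aeval_linSubst, h0]))
  have hFG' : F = linSubst N stdConic * linSubst N G' := by
    rw [← map_mul, ← hFG, linSubst_linSubst hMN]
  refine ⟨linSubst N G', linSubst_isHomogeneous N hG', fun i => ?_, fun h => by simp [hFG', h]⟩
  have hi := hm i
  rw [hFG', map_mul] at hi
  split_ifs with hik
  · subst hik
    refine Polynomial.prime_X.pow_dvd_of_dvd_mul_left _ (not_X_dvd_expandAt ?_) hi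
    rwa [aeval_linSubst_apply]
  · refine pow_sub_one_dvd_of_dvd_mul Polynomial.prime_X (not_X_sq_dvd_expandAt hNM ?_) hi
    have hcp : c i * N.mulVec (p i) 0 = 1 := by
      have h1 (j : Fin 3) : N 0 0 * M 0 j + N 0 1 * M 1 j + N 0 2 * M 2 j =
          (1 : Matrix (Fin 3) (Fin 3) ℂ) 0 j := by
        rw [← hNM, Matrix.mul_apply, Fin.sum_univ_three]
      have a0 := h1 0
      have a1 := h1 1
      have a2 := h1 2
      simp at a0 a1 a2
      simp only [Matrix.mulVec, dotProduct, Fin.sum_univ_three]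
      linear_combination a0 + t i * a1 + t i ^ 2 * a2 - N 0 0 * hM i hik 0 -
        N 0 1 * hM i hik 1 - N 0 2 * hM i hik 2
    exact right_ne_zero_of_mul_eq_one hcp

theorem mem_linSys {k : ℕ} {p : Fin k → Fin 3 → ℂ} {d : ℕ} {m : Fin k → ℕ}
    {F : MvPolynomial (Fin 3) ℂ} : F ∈ linSys p d m ↔ F.IsHomogeneous d ∧
      ∀ i, ∀ ν : Fin 3 → ℕ, ν 0 + ν 1 + ν 2 < m i → aeval (p i) (mderiv ν F) = 0 := by
  simp [linSys]

/-- The trivial linear systems form a Zariski-open set of point configurations. -/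
theorem exists_linSys_eq_bot {k : ℕ} {p₀ : Fin k → Fin 3 → ℂ} {d : ℕ} {m : Fin k → ℕ}
    (h : linSys p₀ d m = ⊥) : ∃ P : MvPolynomial (Fin k × Fin 3) ℂ, P ≠ 0 ∧
      ∀ p : Fin k → Fin 3 → ℂ, eval (fun x => p x.1 x.2) P ≠ 0 → linSys p d m = ⊥ := by
  classical
  let s := {e : Fin 3 →₀ ℕ // e.degree = d}
  have : Finite s := (Finsupp.finite_of_degree_le d).subset (fun e he => le_of_eq he)
  have := Fintype.ofFinite s
  let c := Σ i : Fin k, {ν : Fin 3 → Fin (m i) // (ν 0 : ℕ) + ν 1 + ν 2 < m i}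
  let A : Matrix c s (MvPolynomial (Fin k × Fin 3) ℂ) := fun x e =>
    rename (fun j => (x.1, j)) (mderiv (fun j => x.2.1 j) (monomial e.1 1))
  let ev (p : Fin k → Fin 3 → ℂ) : MvPolynomial (Fin k × Fin 3) ℂ →+* ℂ := eval fun x => p x.1 x.2
  have hA (p : Fin k → Fin 3 → ℂ) (v : s → ℂ) (x : c) : (A.map (ev p)).mulVec v x =
      aeval (p x.1) (mderiv (fun j => x.2.1 j) (∑ e, monomial e.1 (v e))) := by
    simp only [Matrix.mulVec, dotProduct, map_sum, Matrix.map_apply]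
    refine Finset.sum_congr rfl fun e _ => ?_
    have : (monomial e.1 (v e) : MvPolynomial (Fin 3) ℂ) = v e • monomial e.1 1 := by
      simp [smul_monomial]
    rw [this, map_smul, map_smul, smul_eq_mul, mul_comm]
    simp only [A, ev, eval_rename, aeval_eq_eval]
    rfl
  have hcoeff (v : s → ℂ) (e : s) : coeff e.1 (∑ e : s, monomial e.1 (v e)) = v e := by
    rw [coeff_sum, Finset.sum_eq_single e (fun b _ hb => ?_) (by simp)]
    · simp
    · rw [coeff_monomial, if_neg (fun h => hb (Subtype.ext h))]
  have hinj : LinearMap.ker (A.map (ev p₀)).toLin' = ⊥ := by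
    rw [LinearMap.ker_eq_bot']
    intro v hv
    have hF : ∑ e : s, monomial e.1 (v e) ∈ linSys p₀ d m := by
      refine mem_linSys.2 ⟨IsHomogeneous.sum _ _ _ fun e _ => isHomogeneous_monomial _ e.2,
        fun i ν hν => ?_⟩
      have := hA p₀ v ⟨i, fun j => ⟨ν j, by fin_cases j <;> simp <;> omega⟩, hν⟩
      rw [← Matrix.toLin'_apply, hv] at this
      exact this.symm
    rw [h, Submodule.mem_bot] at hF
    ext e
    rw [← hcoeff v e, hF]
    simp
  obtain ⟨B, hB⟩ := LinearMap.exists_leftInverse_of_injective _ hinj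
  let B' : Matrix s c (MvPolynomial (Fin k × Fin 3) ℂ) := (LinearMap.toMatrix' B).map C
  let P := (B' * A).det
  have hP (p : Fin k → Fin 3 → ℂ) : ev p P = (LinearMap.toMatrix' B * A.map (ev p)).det := by
    change ev p (B' * A).det = _
    rw [RingHom.map_det, RingHom.mapMatrix_apply, Matrix.map_mul, Matrix.map_map]
    congr 2
    ext
    simp [ev]
  refine ⟨P, fun h0 => ?_, fun p hp => ?_⟩
  · have := hP p₀
    rw [← LinearMap.toMatrix'_toLin' (A.map (ev p₀)), ← LinearMap.toMatrix'_comp, hB] at this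
    simp [h0] at this
  · rw [eq_bot_iff]
    intro F hF
    obtain ⟨hFd, hF⟩ := mem_linSys.1 hF
    let v : s → ℂ := fun e => coeff e.1 F
    have hFv : ∑ e : s, monomial e.1 (v e) = F := by
      ext e
      by_cases he : e.degree = d
      · exact hcoeff v ⟨e, he⟩
      · rw [hFd.coeff_eq_zero he]
        refine (IsHomogeneous.sum _ _ d fun e _ => isHomogeneous_monomial _ e.2).coeff_eq_zero he
    have hv : (A.map (ev p)).mulVec v = 0 := by
      ext x
      rw [hA, hFv]
      exact hF _ _ x.2.2
    have hv0 : v = 0 := by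
      refine Matrix.eq_zero_of_mulVec_eq_zero (hP p ▸ hp) ?_
      rw [← Matrix.mulVec_mulVec, hv, Matrix.mulVec_zero]
    rw [Submodule.mem_bot, ← hFv, hv0]
    simp

/-- Six points, no three of them collinear and not all on a conic. -/
def sixPoints : Fin 6 → Fin 3 → ℂ :=
  ![![1, 0, 0], ![0, 1, 0], ![0, 0, 1], ![1, 1, 1], ![1, -2, -1], ![1, 3, 4]]

theorem exists_factor_sixPoints (k : Fin 6) {d : ℕ} {m : Fin 6 → ℕ}
    {F : MvPolynomial (Fin 3) ℂ} (hF : F.IsHomogeneous (2 + d))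
    (hm : ∀ i, Polynomial.X ^ m i ∣ expandAt (sixPoints i) F)
    (hd : 2 * (2 + d) < ∑ i ∈ Finset.univ.erase k, m i) :
    ∃ G : MvPolynomial (Fin 3) ℂ, G.IsHomogeneous d ∧
      (∀ i, Polynomial.X ^ (if i = k then m i else m i - 1) ∣ expandAt (sixPoints i) G) ∧
      (G = 0 → F = 0) := by
  fin_cases k
  · refine exists_conic_factor (M := !![0, -1, -1; 0, -7, 5; -3, -1, 2])
      (N := !![-1/4, 1/12, -1/3; -5/12, -1/12, 0; -7/12, 1/12, 0])
      (t := ![0, -1, 0, 1, 3, 1/2]) (c := ![0, 12, -3, -2, -12, -3/4])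
      ?_ ?_ ?_ ?_ ?_ hF hm hd
    · simp only [Matrix.mul_fin_three, Matrix.one_fin_three]
      norm_num
    · intro i hi j hj h
      fin_cases i <;> fin_cases j <;> first | rfl | (exfalso; revert hi hj h; norm_num)
    · intro i hi
      fin_cases i <;> first | exact absurd rfl hi | norm_num
    · intro i hi j
      fin_cases i <;> first | exact absurd rfl hi | (fin_cases j <;> simp [sixPoints] <;> norm_num)
    · simp [sixPoints, stdConic]
      norm_num
  · refine exists_conic_factor (M := !![0, 0, -3; 0, 6, 3; -2, 3, 2])
      (N := !![-1/12, 1/4, -1/2; 1/6, 1/6, 0; -1/3, 0, 0])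
      (t := ![-2, 0, 0, -1, 2, -1/2]) (c := ![-12, 0, -2, -3, -12, -3/4])
      ?_ ?_ ?_ ?_ ?_ hF hm hd
    · simp only [Matrix.mul_fin_three, Matrix.one_fin_three]
      norm_num
    · intro i hi j hj h
      fin_cases i <;> fin_cases j <;> first | rfl | (exfalso; revert hi hj h; norm_num)
    · intro i hi
      fin_cases i <;> first | exact absurd rfl hi | norm_num
    · intro i hi j
      fin_cases i <;> first | exact absurd rfl hi | (fin_cases j <;> simp [sixPoints] <;> norm_num)
    · simp [sixPoints, stdConic]
  · refine exists_conic_factor (M := !![2, -2, 0; -4, -3, 1; -2, 0, 2])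
      (N := !![1/4, -1/6, 1/12; -1/4, -1/6, 1/12; 1/4, -1/6, 7/12])
      (t := ![-1, 1, 0, -2, 0, -5]) (c := ![4, -6, 0, 6, 2, 12])
      ?_ ?_ ?_ ?_ ?_ hF hm hd
    · simp only [Matrix.mul_fin_three, Matrix.one_fin_three]
      norm_num
    · intro i hi j hj h
      fin_cases i <;> fin_cases j <;> first | rfl | (exfalso; revert hi hj h; norm_num)
    · intro i hi
      fin_cases i <;> first | exact absurd rfl hi | norm_num
    · intro i hi j
      fin_cases i <;> first | exact absurd rfl hi | (fin_cases j <;> simp [sixPoints] <;> norm_num)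
    · simp [sixPoints, stdConic]
      norm_num
  · refine exists_conic_factor (M := !![0, 1, -1; 4, -2, -2; 0, -4, -2])
      (N := !![-1/6, 1/4, -1/6; 1/3, 0, -1/6; -2/3, 0, -1/6])
      (t := ![-2, 0, 1, 0, -1, 4]) (c := ![-6, 4, -6, 0, -2, -12])
      ?_ ?_ ?_ ?_ ?_ hF hm hd
    · simp only [Matrix.mul_fin_three, Matrix.one_fin_three]
      norm_num
    · intro i hi j hj h
      fin_cases i <;> fin_cases j <;> first | rfl | (exfalso; revert hi hj h; norm_num)
    · intro i hi
      fin_cases i <;> first | exact absurd rfl hi | norm_num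
    · intro i hi j
      fin_cases i <;> first | exact absurd rfl hi | (fin_cases j <;> simp [sixPoints] <;> norm_num)
    · simp [sixPoints, stdConic]
      norm_num
  · refine exists_conic_factor (M := !![0, 1, 1; 0, 9, -3; 6, 4, -2])
      (N := !![1/12, -1/12, 1/6; 1/4, 1/12, 0; 3/4, -1/12, 0])
      (t := ![3, -1, 0, 2, 0, 1]) (c := ![12, -12, 6, 6, 0, 2])
      ?_ ?_ ?_ ?_ ?_ hF hm hd
    · simp only [Matrix.mul_fin_three, Matrix.one_fin_three]
      norm_num
    · intro i hi j hj h
      fin_cases i <;> fin_cases j <;> first | rfl | (exfalso; revert hi hj h; norm_num)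
    · intro i hi
      fin_cases i <;> first | exact absurd rfl hi | norm_num
    · intro i hi j
      fin_cases i <;> first | exact absurd rfl hi | (fin_cases j <;> simp [sixPoints] <;> norm_num)
    · simp [sixPoints, stdConic]
      norm_num
  · refine exists_conic_factor (M := !![0, -1, 1; -2, 0, 2; 0, 3, 3])
      (N := !![1/2, -1/2, 1/6; -1/2, 0, 1/6; 1/2, 0, 1/6])
      (t := ![-1, 0, 1, -2, -1/2, 0]) (c := ![2, -2, 6, 6, 3/4, 0])
      ?_ ?_ ?_ ?_ ?_ hF hm hd
    · simp only [Matrix.mul_fin_three, Matrix.one_fin_three]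
      norm_num
    · intro i hi j hj h
      fin_cases i <;> fin_cases j <;> first | rfl | (exfalso; revert hi hj h; norm_num)
    · intro i hi
      fin_cases i <;> first | exact absurd rfl hi | norm_num
    · intro i hi j
      fin_cases i <;> first | exact absurd rfl hi | (fin_cases j <;> simp [sixPoints] <;> norm_num)
    · simp [sixPoints, stdConic]
      norm_num

theorem linSys_sixPoints : linSys sixPoints 14 (fun _ => 6) = ⊥ := by
  rw [eq_bot_iff]
  intro F hF
  obtain ⟨hF, hF'⟩ := mem_linSys.1 hF
  obtain ⟨F₁, h₁, h₁', z₁⟩ := exists_factor_sixPoints 0 (d := 12) (m := fun _ => 6) hF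
    (fun i => X_pow_dvd_expandAt (hF' i)) (by decide)
  obtain ⟨F₂, h₂, h₂', z₂⟩ := exists_factor_sixPoints 1 (d := 10) h₁ h₁' (by decide)
  obtain ⟨F₃, h₃, h₃', z₃⟩ := exists_factor_sixPoints 2 (d := 8) h₂ h₂' (by decide)
  obtain ⟨F₄, h₄, h₄', z₄⟩ := exists_factor_sixPoints 3 (d := 6) h₃ h₃' (by decide)
  obtain ⟨F₅, h₅, h₅', z₅⟩ := exists_factor_sixPoints 4 (d := 4) h₄ h₄' (by decide)
  obtain ⟨F₆, h₆, h₆', z₆⟩ := exists_factor_sixPoints 5 (d := 2) h₅ h₅' (by decide)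
  obtain ⟨F₇, h₇, h₇', z₇⟩ := exists_factor_sixPoints 5 (d := 0) h₆ h₆' (by decide)
  refine z₁ (z₂ (z₃ (z₄ (z₅ (z₆ (z₇ ?_))))))
  have h := h₇' 5
  rw [← totalDegree_zero_iff_isHomogeneous, totalDegree_eq_zero_iff_eq_C] at h₇
  by_contra hne
  refine not_X_dvd_expandAt (p := sixPoints 5) (F := F₇) ?_ (by simpa using h)
  rw [h₇] at hne ⊢
  simpa using hne

theorem empty_L_14_six_points :
    Generically 6 (fun p => projDim p 14 (fun _ : Fin 6 => 6) = -1) ∧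
    ∀ m0 : ℕ, Generically 7 (fun p => projDim p 14 (qh 6 m0) = -1) := by
  obtain ⟨P, hP, h⟩ := exists_linSys_eq_bot linSys_sixPoints
  have hdim {k : ℕ} {p : Fin k → Fin 3 → ℂ} {d : ℕ} {m : Fin k → ℕ}
      (h : linSys p d m = ⊥) : projDim p d m = -1 := by
    rw [projDim, h, finrank_bot]
    norm_num
  refine ⟨⟨P, hP, fun p _ hp => hdim (h p hp)⟩, fun m0 =>
    ⟨rename (Prod.map Fin.succ id) P, ?_, fun p _ hp => ?_⟩⟩
  · rwa [Ne, map_eq_zero_iff _ (rename_injective _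
      ((Fin.succ_injective 6).prodMap Function.injective_id))]
  · rw [eval_rename] at hp
    have hbot : linSys p 14 (qh 6 m0) = ⊥ := by
      rw [eq_bot_iff, ← h (fun i => p i.succ) hp]
      intro F hF
      obtain ⟨hF, hF'⟩ := mem_linSys.1 hF
      exact mem_linSys.2 ⟨hF, fun i ν hν => hF' i.succ ν (by simpa [qh] using hν)⟩
    exact hdim hbot
end

section
/- For general points, the following quasi-homogeneous systems of multiplicity 6 are empty (ℓ = −1), each having virtual dimension −1, and hence are non-special: L(15, 4, 6^6), L(16, 3, 6^7), L(17, 2, 6^8), and L(22, 2, 6^{13}). -/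
open MvPolynomial

/-- The value at `p` of the derivative `∂ˣ^ν.1 ∂ʸ^ν.2` of the monomial
`x ^ α.1 * y ^ α.2 * z ^ (d - α.1 - α.2)`. -/
def monoDeriv {R : Type*} [CommSemiring R] (d : ℕ) (p : Fin 3 → R) (ν α : ℕ × ℕ) : R :=
  ((α.1.descFactorial ν.1 * α.2.descFactorial ν.2 : ℕ) : R) *
    (p 0 ^ (α.1 - ν.1) * p 1 ^ (α.2 - ν.2) * p 2 ^ (d - α.1 - α.2))

lemma map_monoDeriv {R S : Type*} [CommSemiring R] [CommSemiring S] (f : R →+* S) (d : ℕ)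
    (p : Fin 3 → R) (ν α : ℕ × ℕ) :
    f (monoDeriv d p ν α) = monoDeriv d (fun j => f (p j)) ν α := by
  simp [monoDeriv]

/-- No nonzero polynomial over `R` with exponents in `D` vanishes to order `m` at `(1, 1)`. -/
def Unisolvent (R : Type*) [CommRing R] (D : Finset (ℕ × ℕ)) (m : ℕ) : Prop :=
  ∀ c : ℕ × ℕ → R,
    (∀ ν : ℕ × ℕ, ν.1 + ν.2 < m →
      ∑ α ∈ D, c α * ((α.1.descFactorial ν.1 * α.2.descFactorial ν.2 : ℕ) : R) = 0) →
    ∀ α ∈ D, c α = 0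

/-- The affine form with coefficients `l`, evaluated at a lattice point. -/
def affineForm (l : ℤ × ℤ × ℤ) (α : ℕ × ℕ) : ℤ := l.1 * α.1 + l.2.1 * α.2 + l.2.2

lemma mul_descFactorial_cast {R : Type*} [CommRing R] (n k : ℕ) :
    (n : R) * (n.descFactorial k : R) =
      (n.descFactorial (k + 1) : R) + k * (n.descFactorial k : R) := by
  rcases le_or_gt k n with h | h
  · rw [Nat.descFactorial_succ, Nat.cast_mul, Nat.cast_sub h]
    ring
  · simp [Nat.descFactorial_eq_zero_iff_lt.2 h]

lemma Unisolvent.of_line {R : Type*} [CommRing R] [IsDomain R] [CharZero R]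
    {D : Finset (ℕ × ℕ)} {m : ℕ} (l : ℤ × ℤ × ℤ)
    (h_on : Unisolvent R (D.filter fun α => affineForm l α = 0) (m + 1))
    (h_off : Unisolvent R (D.filter fun α => ¬ affineForm l α = 0) m) :
    Unisolvent R D (m + 1) := by
  intro c hc
  have h1 : ∀ α ∈ D.filter (fun α => ¬ affineForm l α = 0), c α = 0 := by
    have key := h_off (fun α => c α * (affineForm l α : R)) ?_
    · intro α hα
      have := key α hα
      rcases mul_eq_zero.1 this with h | h
      · exact h
      · exact absurd (by exact_mod_cast h) (Finset.mem_filter.1 hα).2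
    · rintro ⟨a, b⟩ hν
      simp only at hν
      rw [Finset.sum_filter_of_ne]
      · have e1 := hc (a + 1, b) (by simp only; omega)
        have e2 := hc (a, b + 1) (by simp only; omega)
        have e3 := hc (a, b) (by simp only; omega)
        have e4 := congrArg₂ (· + ·) (congrArg₂ (· + ·) (congrArg ((l.1 : R) * ·) e1)
          (congrArg ((l.2.1 : R) * ·) e2))
          (congrArg ((l.1 * a + l.2.1 * b + l.2.2 : R) * ·) e3)
        simp only [mul_zero, add_zero, Finset.mul_sum, ← Finset.sum_add_distrib] at e4
        rw [← e4]
        refine Finset.sum_congr rfl fun α _ => ?_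
        have r1 := mul_descFactorial_cast (R := R) α.1 a
        have r2 := mul_descFactorial_cast (R := R) α.2 b
        simp only [affineForm]
        push_cast
        linear_combination (c α * l.1 * (α.2.descFactorial b : R)) * r1 +
          (c α * l.2.1 * (α.1.descFactorial a : R)) * r2
      · intro α _ h h0
        simp [h0] at h
  have h2 := h_on c ?_
  · intro α hα
    by_cases h : affineForm l α = 0
    · exact h2 α (Finset.mem_filter.2 ⟨hα, h⟩)
    · exact h1 α (Finset.mem_filter.2 ⟨hα, h⟩)
  · intro ν hν
    rw [← hc ν hν, ← Finset.sum_filter_add_sum_filter_not D (fun α => affineForm l α = 0),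
      left_eq_add]
    exact Finset.sum_eq_zero fun α hα => by rw [h1 α hα, zero_mul]

lemma Unisolvent.of_card_le {R : Type*} [CommRing R] [IsDomain R] [CharZero R]
    (m : ℕ) : ∀ D : Finset (ℕ × ℕ), D.card ≤ m → Unisolvent R D m := by
  induction m with
  | zero =>
    intro D hD c _ α hα
    simp_all
  | succ m ih =>
    intro D
    induction D using Finset.strongInduction with
    | H D ihD =>
    intro hD
    by_cases hsub : D.card ≤ 1
    · intro c hc α hα
      have : D = {α} := (Finset.card_le_one_iff_subset_singleton.1 hsub).elim fun x hx => by
        have := hx hα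
        rw [Finset.mem_singleton] at this
        subst this
        exact Finset.Subset.antisymm hx (by simpa using hα)
      simpa [this] using hc (0, 0) (by simp)
    · obtain ⟨α, hα, β, hβ, hne⟩ := Finset.one_lt_card.1 (not_le.1 hsub)
      obtain ⟨l, hl1, hl2⟩ : ∃ l, affineForm l α = 0 ∧ ¬ affineForm l β = 0 := by
        by_cases h : α.1 = β.1
        · refine ⟨(0, 1, -α.2), by simp [affineForm], ?_⟩
          have : α.2 ≠ β.2 := fun h' => hne (Prod.ext h h')
          simp only [affineForm]
          omega
        · refine ⟨(1, 0, -α.1), by simp [affineForm], ?_⟩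
          simp only [affineForm]
          omega
      have hs1 : D.filter (fun α => affineForm l α = 0) ⊂ D :=
        Finset.filter_ssubset.2 ⟨β, hβ, hl2⟩
      have hs2 : D.filter (fun α => ¬ affineForm l α = 0) ⊂ D :=
        Finset.filter_ssubset.2 ⟨α, hα, not_not.2 hl1⟩
      exact Unisolvent.of_line l (ihD _ hs1 ((Finset.card_le_card hs1.subset).trans hD))
        (ih _ (Nat.lt_succ_iff.1 ((Finset.card_lt_card hs2).trans_le hD)))

/-- Check unisolvence by peeling off the lattice points of `D` along the lines `ls`. -/
def checkUnisolvent : List (ℤ × ℤ × ℤ) → Finset (ℕ × ℕ) → ℕ → Bool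
  | [], D, m => decide (D.card ≤ m)
  | _ :: _, _, 0 => false
  | l :: ls, D, m + 1 =>
    decide ((D.filter fun α => affineForm l α = 0).card ≤ m + 1) &&
      checkUnisolvent ls (D.filter fun α => ¬ affineForm l α = 0) m

lemma Unisolvent.of_check {R : Type*} [CommRing R] [IsDomain R] [CharZero R]
    (ls : List (ℤ × ℤ × ℤ)) : ∀ (D : Finset (ℕ × ℕ)) (m : ℕ),
      checkUnisolvent ls D m = true → Unisolvent R D m := by
  induction ls with
  | nil => exact fun D m h => Unisolvent.of_card_le m D (of_decide_eq_true h)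
  | cons l ls ih =>
    rintro D (_ | m) h
    · simp [checkUnisolvent] at h
    · simp only [checkUnisolvent, Bool.and_eq_true, decide_eq_true_eq] at h
      exact Unisolvent.of_line l (Unisolvent.of_card_le _ _ h.1) (ih _ _ h.2)

/-- No nonzero form of degree `d` over `R` with exponents in `D` has multiplicity `mult i`
at `p i` for every `i`. -/
def Independent {R : Type*} [CommRing R] (d : ℕ) (D : Finset (ℕ × ℕ)) (p : ℕ → Fin 3 → R)
    (mult : ℕ → ℕ) : Prop :=
  ∀ c : ℕ × ℕ → R,
    (∀ i, ∀ ν : ℕ × ℕ, ν.1 + ν.2 < mult i → ∑ α ∈ D, c α * monoDeriv d (p i) ν α = 0) →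
    ∀ α ∈ D, c α = 0

/-- The degree of the monomial with exponent `α` on the curve `t ↦ (t ^ w₀, t ^ w₁, t ^ w₂)`. -/
def monoWeight (d : ℕ) (w : ℕ × ℕ × ℕ) (α : ℕ × ℕ) : ℕ :=
  w.1 * α.1 + w.2.1 * α.2 + w.2.2 * (d - α.1 - α.2)

lemma X_pow_mul_monoDeriv {R : Type*} [CommRing R] (d : ℕ) (w : ℕ × ℕ × ℕ) (ν α : ℕ × ℕ) :
    (Polynomial.X : Polynomial R) ^ (w.1 * ν.1 + w.2.1 * ν.2) *
        monoDeriv d ![Polynomial.X ^ w.1, Polynomial.X ^ w.2.1, Polynomial.X ^ w.2.2] ν α =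
      Polynomial.C ((α.1.descFactorial ν.1 * α.2.descFactorial ν.2 : ℕ) : R) *
        Polynomial.X ^ monoWeight d w α := by
  by_cases h1 : ν.1 ≤ α.1
  · by_cases h2 : ν.2 ≤ α.2
    · obtain ⟨a, ha⟩ := Nat.exists_eq_add_of_le h1
      obtain ⟨b, hb⟩ := Nat.exists_eq_add_of_le h2
      simp only [monoDeriv, monoWeight, Matrix.cons_val, ← pow_mul]
      rw [show α.1 - ν.1 = a by omega, show α.2 - ν.2 = b by omega,
        show w.1 * α.1 = w.1 * ν.1 + w.1 * a by rw [ha, mul_add],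
        show w.2.1 * α.2 = w.2.1 * ν.2 + w.2.1 * b by rw [hb, mul_add], map_natCast]
      ring
    · simp [monoDeriv, Nat.descFactorial_eq_zero_iff_lt.2 (not_le.1 h2)]
  · simp [monoDeriv, Nat.descFactorial_eq_zero_iff_lt.2 (not_le.1 h1)]

/-- The configuration over `R[t]` obtained from `p` by adding the point
`(t ^ w₀, t ^ w₁, t ^ w₂)`. -/
noncomputable def consPoint {R : Type*} [CommRing R] (w : ℕ × ℕ × ℕ) (p : ℕ → Fin 3 → R) :
    ℕ → Fin 3 → Polynomial R
  | 0 => ![Polynomial.X ^ w.1, Polynomial.X ^ w.2.1, Polynomial.X ^ w.2.2]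
  | i + 1 => fun j => Polynomial.C (p i j)

lemma Independent.cons_point {R : Type*} [CommRing R] [IsDomain R] {d : ℕ}
    {D : Finset (ℕ × ℕ)} {p : ℕ → Fin 3 → R} {mult : ℕ → ℕ} (w : ℕ × ℕ × ℕ) (T : ℕ)
    (h_low : Unisolvent R (D.filter fun α => monoWeight d w α < T) (mult 0))
    (h_high : Independent d (D.filter fun α => ¬ monoWeight d w α < T) p fun i => mult (i + 1)) :
    Independent d D (consPoint w p) mult := by
  suffices H : ∀ (n : ℕ) (c : ℕ × ℕ → Polynomial R),
      (∀ i, ∀ ν : ℕ × ℕ, ν.1 + ν.2 < mult i →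
        ∑ α ∈ D, c α * monoDeriv d (consPoint w p i) ν α = 0) →
      ∀ α ∈ D, (c α).coeff n = 0 from
    fun c hc α hα => Polynomial.ext fun n => by simpa using H n c hc α hα
  have base : ∀ c : ℕ × ℕ → Polynomial R,
      (∀ i, ∀ ν : ℕ × ℕ, ν.1 + ν.2 < mult i →
        ∑ α ∈ D, c α * monoDeriv d (consPoint w p i) ν α = 0) →
      ∀ α ∈ D, (c α).coeff 0 = 0 := by
    intro c hc
    have low : ∀ α ∈ D.filter (fun α => monoWeight d w α < T), (c α).coeff 0 = 0 := by
      intro β hβ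
      have := h_low (fun α => (c α * Polynomial.X ^ monoWeight d w α).coeff (monoWeight d w β))
        ?_ β hβ
      · simpa [Polynomial.coeff_mul_X_pow'] using this
      · intro ν hν
        have e := congrArg (fun q => (Polynomial.X ^ (w.1 * ν.1 + w.2.1 * ν.2) * q).coeff
          (monoWeight d w β)) (hc 0 ν hν)
        simp only [consPoint, Finset.mul_sum, Polynomial.finsetSum_coeff, mul_zero,
          Polynomial.coeff_zero] at e
        rw [← e, ← Finset.sum_filter_add_sum_filter_not D (fun α => monoWeight d w α < T)]
        rw [Finset.sum_eq_zero (s := D.filter (fun α => ¬ monoWeight d w α < T)), add_zero]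
        · refine Finset.sum_congr rfl fun α _ => ?_
          rw [mul_left_comm, X_pow_mul_monoDeriv, mul_left_comm, Polynomial.coeff_C_mul, mul_comm]
        · intro α hα
          have h1 := (Finset.mem_filter.1 hα).2
          have h2 := (Finset.mem_filter.1 hβ).2
          rw [mul_left_comm, X_pow_mul_monoDeriv, mul_left_comm, Polynomial.coeff_C_mul,
            Polynomial.coeff_mul_X_pow', if_neg (by omega), mul_zero]
    have high := h_high (fun α => (c α).coeff 0) ?_
    · intro α hα
      by_cases h : monoWeight d w α < T
      · exact low α (Finset.mem_filter.2 ⟨hα, h⟩)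
      · exact high α (Finset.mem_filter.2 ⟨hα, h⟩)
    · intro i ν hν
      have e := congrArg (fun q => Polynomial.coeff q 0) (hc (i + 1) ν hν)
      simp only [consPoint, ← map_monoDeriv Polynomial.C, Polynomial.finsetSum_coeff,
        Polynomial.coeff_mul_C, Polynomial.coeff_zero] at e
      rw [← e, ← Finset.sum_filter_add_sum_filter_not D (fun α => monoWeight d w α < T),
        right_eq_add]
      exact Finset.sum_eq_zero fun α hα => by rw [low α hα, zero_mul]
  intro n
  induction n with
  | zero => exact base
  | succ n ih =>
    intro c hc α hα
    rw [← Polynomial.coeff_divX]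
    refine ih (fun α => (c α).divX) (fun i ν hν => ?_) α hα
    refine (mul_eq_zero.1 (?_ : (Polynomial.X : Polynomial R) * _ = 0)).resolve_left
      Polynomial.X_ne_zero
    rw [← hc i ν hν, Finset.mul_sum]
    refine Finset.sum_congr rfl fun β hβ => ?_
    have e := Polynomial.divX_mul_X_add (c β)
    rw [base c hc β hβ, map_zero, add_zero] at e
    conv_rhs => rw [← e]
    ring

/-- A cut of an exponent diagram: a multiplicity, a weight and a threshold selecting the exponents
to be removed, and lines certifying that these are unisolvent. -/
abbrev Cut := ℕ × (ℕ × ℕ × ℕ) × ℕ × List (ℤ × ℤ × ℤ)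

/-- Check that the given cuts exhaust the diagram `D` by unisolvent pieces. -/
def checkCuts (d : ℕ) : List Cut → Finset (ℕ × ℕ) → Bool
  | [], D => decide (D.card = 0)
  | (m, w, T, ls) :: cuts, D =>
    checkUnisolvent ls (D.filter fun α => monoWeight d w α < T) m &&
      checkCuts d cuts (D.filter fun α => ¬ monoWeight d w α < T)

lemma exists_independent_of_checkCuts (d : ℕ) (cuts : List Cut) : ∀ D : Finset (ℕ × ℕ),
    checkCuts d cuts D = true →
    ∃ (R : Type) (_ : CommRing R) (_ : IsDomain R) (_ : CharZero R) (p : ℕ → Fin 3 → R),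
      Independent d D p fun i => (cuts.map Prod.fst).getD i 0 := by
  induction cuts with
  | nil =>
    intro D h
    have hD : D = ∅ := Finset.card_eq_zero.1 (of_decide_eq_true h)
    exact ⟨ℤ, inferInstance, inferInstance, inferInstance, 0, fun c _ α hα => by simp [hD] at hα⟩
  | cons cut cuts ih =>
    obtain ⟨m, w, T, ls⟩ := cut
    intro D h
    simp only [checkCuts, Bool.and_eq_true] at h
    obtain ⟨R, _, _, _, p, hp⟩ := ih _ h.2
    refine ⟨Polynomial R, inferInstance, inferInstance, inferInstance, consPoint w p, ?_⟩
    exact Independent.cons_point w T (Unisolvent.of_check ls _ _ h.1) hp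

/-- The exponents `(i, j)` of the monomials `x ^ i * y ^ j * z ^ (d - i - j)`. -/
def triangle (d : ℕ) : Finset (ℕ × ℕ) :=
  (Finset.range (d + 1) ×ˢ Finset.range (d + 1)).filter fun α => α.1 + α.2 ≤ d

/-- The conditions imposed by points of multiplicities `m`, indexed by a point and the order of
a derivative in the first two variables. -/
def conditions {k : ℕ} (m : Fin k → ℕ) : Finset (Σ _ : Fin k, ℕ × ℕ) :=
  Finset.univ.sigma fun i =>
    (Finset.range (m i) ×ˢ Finset.range (m i)).filter fun ν => ν.1 + ν.2 < m i

lemma mem_conditions {k : ℕ} {m : Fin k → ℕ} {i : Fin k} {ν : ℕ × ℕ} :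
    ⟨i, ν⟩ ∈ conditions m ↔ ν.1 + ν.2 < m i := by
  simp only [conditions, Finset.mem_sigma, Finset.mem_univ, Finset.mem_filter, Finset.mem_product,
    Finset.mem_range, true_and]
  omega

/-- The exponent vector `(i, j, d - i - j)`. -/
noncomputable def exponent (d : ℕ) (α : ℕ × ℕ) : Fin 3 →₀ ℕ :=
  Finsupp.equivFunOnFinite.symm ![α.1, α.2, d - α.1 - α.2]

lemma exponent_zero (d : ℕ) (α : ℕ × ℕ) : exponent d α 0 = α.1 := rfl

lemma exponent_one (d : ℕ) (α : ℕ × ℕ) : exponent d α 1 = α.2 := rfl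

lemma exponent_two (d : ℕ) (α : ℕ × ℕ) : exponent d α 2 = d - α.1 - α.2 := rfl

lemma sum_monomial_exponent {d : ℕ} {f : MvPolynomial (Fin 3) ℂ} (hf : f.IsHomogeneous d) :
    f = ∑ α ∈ triangle d, monomial (exponent d α) (coeff (exponent d α) f) := by
  have hinj : Function.Injective (exponent d) := fun α β h =>
    Prod.ext (DFunLike.congr_fun h 0) (DFunLike.congr_fun h 1)
  rw [← Finset.sum_image (f := fun s => monomial s (coeff s f)) hinj.injOn]
  conv_lhs => rw [f.as_sum]
  refine Finset.sum_subset (fun s hs => ?_) fun s _ hs => by simp [notMem_support_iff.1 hs]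
  have hdeg : s 0 + s 1 + s 2 = d := by
    have := (DFunLike.congr_fun (Finsupp.degree_eq_weight_one (R := ℕ)) s).trans
      (hf (mem_support_iff.1 hs))
    rwa [Finsupp.degree_eq_sum, Fin.sum_univ_three] at this
  refine Finset.mem_image.2 ⟨(s 0, s 1), ?_, ?_⟩
  · simp only [triangle, Finset.mem_filter, Finset.mem_product, Finset.mem_range]
    omega
  · ext j
    fin_cases j
    · rfl
    · rfl
    · change d - s 0 - s 1 = s 2
      omega

lemma pderiv_pow_monomial (i : Fin 3) (n : ℕ) (s : Fin 3 →₀ ℕ) (a : ℂ) :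
    ((pderiv (R := ℂ) i).toLinearMap ^ n) (monomial s a) =
      monomial (s - Finsupp.single i n) (a * ((s i).descFactorial n : ℂ)) := by
  induction n with
  | zero => simp
  | succ n ih =>
    rw [pow_succ', Module.End.mul_apply, ih]
    simp only [Derivation.coeFn_coe, pderiv_monomial]
    rw [Nat.descFactorial_succ, tsub_tsub, ← Finsupp.single_add]
    congr 1
    simp
    ring

lemma aeval_mderiv_monomial (d : ℕ) (p : Fin 3 → ℂ) (ν α : ℕ × ℕ) (a : ℂ) :
    aeval p (mderiv ![ν.1, ν.2, 0] (monomial (exponent d α) a)) =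
      a * monoDeriv d p ν α := by
  simp only [mderiv, LinearMap.comp_apply, pderiv_pow_monomial, Matrix.cons_val, aeval_monomial]
  rw [Finsupp.prod_fintype _ _ (by simp), Fin.prod_univ_three]
  simp only [Finsupp.tsub_apply, exponent_zero, exponent_one, exponent_two, Finsupp.single_apply,
    monoDeriv]
  simp
  ring

/-- The square matrix of the conditions on forms of degree `d`, with rows reindexed by the
exponents. -/
def condMatrix {R : Type*} [CommRing R] {k : ℕ} (d : ℕ) (m : Fin k → ℕ)
    (e : triangle d ≃ conditions m) (p : Fin k → Fin 3 → R) :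
    Matrix (triangle d) (triangle d) R :=
  Matrix.of fun r α => monoDeriv d (p (e r).1.1) (e r).1.2 α

lemma det_condMatrix_ne_zero_iff {R : Type*} [CommRing R] [IsDomain R] {k : ℕ} {d : ℕ}
    {m : Fin k → ℕ} (e : triangle d ≃ conditions m) (p : Fin k → Fin 3 → R) :
    (condMatrix d m e p).det ≠ 0 ↔ ∀ c : ℕ × ℕ → R,
      (∀ i, ∀ ν : ℕ × ℕ, ν.1 + ν.2 < m i →
        ∑ α ∈ triangle d, c α * monoDeriv d (p i) ν α = 0) →
      ∀ α ∈ triangle d, c α = 0 := by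
  have mulVec_eq : ∀ (c : ℕ × ℕ → R) (r : triangle d),
      (condMatrix d m e p).mulVec (fun β => c β) r =
        ∑ α ∈ triangle d, c α * monoDeriv d (p (e r).1.1) (e r).1.2 α := by
    intro c r
    rw [← Finset.sum_coe_sort]
    exact Finset.sum_congr rfl fun α _ => mul_comm _ _
  rw [Ne, ← Matrix.exists_mulVec_eq_zero_iff, not_exists]
  constructor
  · intro h c hc α hα
    by_contra hne
    refine h (fun β => c β) ⟨fun h0 => hne (congrFun h0 ⟨α, hα⟩), funext fun r => ?_⟩
    rw [mulVec_eq]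
    exact hc _ _ (mem_conditions.1 (e r).2)
  · rintro h v ⟨hv, hMv⟩
    obtain ⟨c, hc⟩ : ∃ c : ℕ × ℕ → R, v = fun β : triangle d => c β :=
      ⟨fun α => if hα : α ∈ triangle d then v ⟨α, hα⟩ else 0, by simp⟩
    subst hc
    refine hv (funext fun β => h c (fun i ν hν => ?_) β β.2)
    have := congrFun hMv (e.symm ⟨⟨i, ν⟩, mem_conditions.2 hν⟩)
    rwa [mulVec_eq, Equiv.apply_symm_apply] at this

lemma map_det_condMatrix {R S : Type*} [CommRing R] [CommRing S] (f : R →+* S) {k : ℕ} {d : ℕ}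
    {m : Fin k → ℕ} (e : triangle d ≃ conditions m) (p : Fin k → Fin 3 → R) :
    f (condMatrix d m e p).det = (condMatrix d m e fun i j => f (p i j)).det := by
  rw [RingHom.map_det]
  congr 1
  ext r α
  exact map_monoDeriv f d _ _ _

lemma linSys_eq_bot_of_det_ne_zero {k : ℕ} {d : ℕ} {m : Fin k → ℕ}
    (e : triangle d ≃ conditions m) (p : Fin k → Fin 3 → ℂ)
    (h : (condMatrix d m e p).det ≠ 0) : linSys p d m = ⊥ := by
  rw [Submodule.eq_bot_iff]
  intro f hf
  simp only [linSys, Submodule.mem_inf, Submodule.mem_iInf, LinearMap.mem_ker] at hf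
  have hsum := sum_monomial_exponent (d := d) hf.1
  have hc := (det_condMatrix_ne_zero_iff e p).1 h (fun α => coeff (exponent d α) f) ?_
  · rw [hsum]
    exact Finset.sum_eq_zero fun α hα => by rw [hc α hα, map_zero]
  · intro i ν hν
    have := hf.2 i ![ν.1, ν.2, 0] (by simpa using hν)
    rw [hsum, map_sum] at this
    rw [← this]
    exact Finset.sum_congr rfl fun α _ => (aeval_mderiv_monomial d (p i) ν α _).symm

lemma generically_linSys_eq_bot {R : Type*} [CommRing R] [IsDomain R] [CharZero R] {k : ℕ} {d : ℕ}
    {m : Fin k → ℕ} (hcard : (triangle d).card = (conditions m).card) {p : ℕ → Fin 3 → R}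
    {mult : ℕ → ℕ} (hm : ∀ i : Fin k, mult i = m i) (hk : ∀ i, k ≤ i → mult i = 0)
    (hp : Independent d (triangle d) p mult) :
    Generically k fun q => linSys q d m = ⊥ := by
  let e : triangle d ≃ conditions m := Finset.equivOfCardEq hcard
  let Q : MvPolynomial (Fin k × Fin 3) ℤ := (condMatrix d m e fun i j => X (i, j)).det
  refine ⟨map (Int.castRingHom ℂ) Q, ?_, fun q _ hq => linSys_eq_bot_of_det_ne_zero e q ?_⟩
  · rw [Ne, ← map_zero (map (Int.castRingHom ℂ)),
      (map_injective _ (RingHom.injective_int (Int.castRingHom ℂ))).eq_iff]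
    have hne : (condMatrix d m e fun i j => p i j).det ≠ 0 := by
      refine (det_condMatrix_ne_zero_iff e _).2 fun c hc => hp c fun i ν hν => ?_
      rcases lt_or_ge i k with hi | hi
      · exact hc ⟨i, hi⟩ ν (hm ⟨i, hi⟩ ▸ hν)
      · rw [hk i hi] at hν
        omega
    intro hQ
    apply hne
    have := map_det_condMatrix (eval₂Hom (Int.castRingHom R) fun x : Fin k × Fin 3 => p x.1 x.2) e
      fun i j => X (i, j)
    simp only [eval₂Hom_X'] at this
    rw [← this]
    exact (congrArg _ hQ).trans (map_zero _)
  · have := map_det_condMatrix (eval₂Hom (Int.castRingHom ℂ) fun x : Fin k × Fin 3 => q x.1 x.2) e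
      fun i j => X (i, j)
    simp only [eval₂Hom_X'] at this
    rwa [eval_map, ← coe_eval₂Hom, this] at hq

lemma generically_of_checkCuts {n m₀ d : ℕ} (cuts : List Cut)
    (hcheck : checkCuts d cuts (triangle d) = true)
    (hcard : (triangle d).card = (conditions (qh n m₀)).card)
    (hlen : cuts.length = n + 1)
    (hm : ∀ i : Fin (n + 1), (cuts.map Prod.fst).getD i 0 = qh n m₀ i)
    (hv : virtDim d (qh n m₀) = -1) :
    virtDim d (qh n m₀) = -1 ∧ Generically (n + 1) (fun p =>
      projDim p d (qh n m₀) = -1 ∧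
      ¬ projDim p d (qh n m₀) > max (-1) (virtDim d (qh n m₀))) := by
  obtain ⟨R, _, _, _, p, hp⟩ := exists_independent_of_checkCuts d cuts _ hcheck
  obtain ⟨P, hP, h⟩ := generically_linSys_eq_bot hcard hm
    (fun i hi => List.getD_eq_default _ _ (by simpa [hlen] using hi)) hp
  refine ⟨hv, P, hP, fun q hq0 hq => ?_⟩
  have hbot : linSys q d (qh n m₀) = ⊥ := h q hq0 hq
  have : projDim q d (qh n m₀) = -1 := by rw [projDim, hbot, finrank_bot]; rfl
  exact ⟨this, by simp [this, hv]⟩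

/-- Cuts of the exponent diagram of `L(15, 4, 6^6)`. -/
def cutsFifteen : List Cut := [
  (4, (0, 1, 1), 4,
    [(1, 0, -12), (1, 0, -13), (1, 0, -14)]),
  (6, (1, 0, 1), 6,
    [(1, 0, 0), (1, 0, -1), (1, 0, -2), (1, 0, -3), (1, 0, -4)]),
  (6, (0, 9, 5), 46,
    [(0, -1, 0), (0, -1, 1), (0, -1, 2), (0, -1, 3), (1, 0, -10)]),
  (6, (0, 14, 5), 76,
    [(0, -1, 0), (0, -1, 1), (0, -1, 2), (0, -1, 3), (0, -1, 4)]),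
  (6, (0, 1, 2), 15,
    [(1, 0, -6), (1, 0, -7), (1, 0, -5), (1, 0, -8), (1, 0, -4)]),
  (6, (1, 0, 2), 18,
    [(-1, -1, 9), (-1, -1, 10), (-1, -1, 8), (-1, -1, 11), (-1, -1, 7)]),
  (6, (0, 1, 0), 7,
    [(1, 0, 0), (1, 0, -1), (1, 0, -2), (1, 0, -3), (1, 0, -4)])]

/-- Cuts of the exponent diagram of `L(16, 3, 6^7)`. -/
def cutsSixteen : List Cut := [
  (3, (1, 1, 0), 3,
    [(1, 0, 0), (1, 0, -1)]),
  (6, (1, 0, 1), 6,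
    [(1, 0, 0), (1, 0, -1), (1, 0, -2), (1, 0, -3), (1, 0, -4)]),
  (6, (1, 0, 2), 12,
    [(0, -1, 10), (0, -1, 9), (0, -1, 8), (0, -1, 7), (0, -1, 6)]),
  (6, (0, 4, 5), 26,
    [(-1, -1, 15), (0, -1, 0), (0, -1, 1), (0, -1, 2), (1, -1, -8)]),
  (6, (0, 17, 9), 104,
    [(0, -1, 0), (0, -1, 1), (0, -1, 2), (0, -1, 3), (1, 0, -9)]),
  (6, (0, 7, 2), 42,
    [(0, -1, 2), (1, -1, -3), (0, -1, 3), (0, -1, 1), (2, -1, -8)]),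
  (6, (1, 0, 4), 31,
    [(-1, -1, 10), (-1, -1, 11), (-1, -1, 12), (-1, -1, 9), (-1, -1, 13)]),
  (6, (1, 0, 1), 14,
    [(1, 0, 0), (1, 0, -1), (1, 0, -2), (1, 0, -3), (1, 0, -4)])]

/-- Cuts of the exponent diagram of `L(17, 2, 6^8)`. -/
def cutsSeventeen : List Cut := [
  (2, (1, 0, 1), 2,
    [(1, 0, 0)]),
  (6, (1, 1, 0), 6,
    [(1, 0, 0), (1, 0, -1), (1, 0, -2), (1, 0, -3), (1, 0, -4)]),
  (6, (0, 1, 1), 6,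
    [(1, 0, -12), (1, 0, -13), (1, 0, -14), (1, 0, -15), (1, 0, -16)]),
  (6, (0, 2, 1), 12,
    [(0, -1, 0), (0, -1, 1), (0, -1, 2), (0, -1, 3), (0, -1, 4)]),
  (6, (0, 4, 3), 36,
    [(1, -1, -5), (1, -1, -4), (1, -1, -3), (1, -1, -2), (1, 0, -8)]),
  (6, (2, 1, 0), 12,
    [(1, 0, 0), (1, 0, -1), (1, 0, -2), (1, 0, -3), (1, 0, -4)]),
  (6, (0, 4, 7), 60,
    [(-1, -1, 17), (-1, -1, 16), (-1, -1, 15), (-1, -1, 14), (1, 0, -6)]),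
  (6, (2, 3, 0), 34,
    [(-1, -1, 11), (-1, -1, 10), (-1, -1, 9), (-1, -1, 12), (-2, -1, 12)]),
  (6, (1, 0, 1), 10,
    [(-1, -1, 13), (-1, -1, 14), (-1, -1, 15), (-1, -1, 12), (-1, -1, 16)])]

/-- Cuts of the exponent diagram of `L(22, 2, 6^13)`. -/
def cutsTwentyTwo : List Cut := [
  (2, (0, 3, 2), 4,
    [(1, 0, -21)]),
  (6, (1, 1, 0), 6,
    [(1, 0, 0), (1, 0, -1), (1, 0, -2), (1, 0, -3), (1, 0, -4)]),
  (6, (1, 0, 1), 6,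
    [(1, 0, 0), (1, 0, -1), (1, 0, -2), (1, 0, -3), (1, 0, -4)]),
  (6, (2, 1, 0), 12,
    [(1, 0, 0), (1, 0, -1), (1, 0, -2), (1, 0, -3), (1, 0, -4)]),
  (6, (2, 3, 0), 24,
    [(-1, -1, 9), (-1, -1, 8), (0, -1, 0), (0, -1, 1), (1, -2, -1)]),
  (6, (2, 5, 0), 36,
    [(-1, -2, 15), (-1, -2, 14), (-1, -2, 16), (-1, -2, 13), (1, -3, -12)]),
  (6, (0, 5, 3), 26,
    [(0, -1, 2), (0, -1, 1), (0, -1, 3), (0, -1, 0), (1, 0, -17)]),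
  (6, (0, 7, 3), 50,
    [(0, -1, 4), (0, -1, 3), (0, -1, 5), (0, -1, 6), (0, -1, 2)]),
  (6, (17, 0, 8), 98,
    [(0, -1, 16), (0, -1, 15), (0, -1, 14), (0, -1, 13), (-1, -1, 12)]),
  (6, (7, 0, 5), 62,
    [(0, -1, 13), (0, -1, 14), (0, -1, 12), (0, -1, 15), (0, -1, 11)]),
  (6, (4, 0, 1), 30,
    [(1, 0, -4), (1, 0, -3), (1, 0, -5), (1, 0, -2), (1, -5, 49)]),
  (6, (0, 7, 5), 74,
    [(1, 0, -12), (1, 0, -11), (1, 0, -13), (1, 0, -10), (3, -5, -7)]),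
  (6, (1, 0, 3), 25,
    [(0, -1, 10), (0, -1, 11), (0, -1, 12), (0, -1, 9), (1, 0, -9)]),
  (6, (0, 1, 0), 10,
    [(0, -1, 7), (0, -1, 6), (0, -1, 5), (0, -1, 8), (0, -1, 9)])]

theorem empty_nonspecial_systems :
    (virtDim 15 (qh 6 4) = -1 ∧
      Generically 7 (fun p =>
        projDim p 15 (qh 6 4) = -1 ∧
        ¬ projDim p 15 (qh 6 4) > max (-1) (virtDim 15 (qh 6 4)))) ∧
    (virtDim 16 (qh 7 3) = -1 ∧
      Generically 8 (fun p =>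
        projDim p 16 (qh 7 3) = -1 ∧
        ¬ projDim p 16 (qh 7 3) > max (-1) (virtDim 16 (qh 7 3)))) ∧
    (virtDim 17 (qh 8 2) = -1 ∧
      Generically 9 (fun p =>
        projDim p 17 (qh 8 2) = -1 ∧
        ¬ projDim p 17 (qh 8 2) > max (-1) (virtDim 17 (qh 8 2)))) ∧
    (virtDim 22 (qh 13 2) = -1 ∧
      Generically 14 (fun p =>
        projDim p 22 (qh 13 2) = -1 ∧
        ¬ projDim p 22 (qh 13 2) > max (-1) (virtDim 22 (qh 13 2)))) := by
  exact ⟨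
    generically_of_checkCuts cutsFifteen (by decide +kernel) (by decide +kernel) rfl
      (by decide +kernel) (by decide +kernel),
    generically_of_checkCuts cutsSixteen (by decide +kernel) (by decide +kernel) rfl
      (by decide +kernel) (by decide +kernel),
    generically_of_checkCuts cutsSeventeen (by decide +kernel) (by decide +kernel) rfl
      (by decide +kernel) (by decide +kernel),
    generically_of_checkCuts cutsTwentyTwo (by decide +kernel) (by decide +kernel) rfl
      (by decide +kernel) (by decide +kernel)⟩
end

section
/- For general points, the following quasi-homogeneous systems of multiplicity 6 are non-special, i.e. their dimension equals the virtual dimension: ℓ(L(15, 3, 6^6)) = 3, ℓ(L(16, 2, 6^7)) = 2, ℓ(L(17, 1, 6^8)) = 1, ℓ(L(19, 5, 6^9)) = 5, and ℓ(L(20, 8, 6^9)) = 5. -/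
open MvPolynomial

namespace InterpolationMatrix

/-- The coefficient `∏ⱼ αⱼ (αⱼ - 1) ⋯ (αⱼ - νⱼ + 1)` produced by differentiating `x ^ α`. -/
def descProd (α ν : Fin 3 → ℕ) : ℕ :=
  (α 0).descFactorial (ν 0) * (α 1).descFactorial (ν 1) * (α 2).descFactorial (ν 2)

/-- The exponent `⟨w, α⟩`. -/
def weight (w α : Fin 3 → ℕ) : ℕ := w 0 * α 0 + w 1 * α 1 + w 2 * α 2

/-- Exponents of monomials of degree `d` in three variables. -/
abbrev Mono (d : ℕ) : Type := {α : Fin 3 → ℕ // α ∈ Finset.Nat.antidiagonalTuple 3 d}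

/-- Conditions for multiplicity `m i` at the `i`-th point: derivatives of order `m i - 1`. -/
abbrev Cond {k : ℕ} (m : Fin k → ℕ) : Type := (i : Fin k) × Mono (m i - 1)

theorem Mono.sum_eq {d : ℕ} (α : Mono d) : α.1 0 + α.1 1 + α.1 2 = d := by
  have := Finset.Nat.mem_antidiagonalTuple.1 α.2
  rwa [Fin.sum_univ_three] at this

/-- The value at `q` of the derivative of order `ν` of the monomial `x ^ α`. -/
noncomputable def derivValue {A : Type*} [CommSemiring A] (q : Fin 3 → A) (ν α : Fin 3 → ℕ) : A :=
  descProd α ν * (q 0 ^ (α 0 - ν 0) * q 1 ^ (α 1 - ν 1) * q 2 ^ (α 2 - ν 2))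

theorem pderiv_pow_monomial (j : Fin 3) (n : ℕ) (s : Fin 3 →₀ ℕ) (a : ℂ) :
    ((pderiv (R := ℂ) j).toLinearMap ^ n) (monomial s a) =
      monomial (s - Finsupp.single j n) (a * (s j).descFactorial n) := by
  induction n with
  | zero => simp
  | succ n ih =>
    rw [pow_succ', Module.End.mul_apply, ih]
    change pderiv j _ = _
    rw [pderiv_monomial, tsub_tsub, ← Finsupp.single_add, Nat.descFactorial_succ]
    congr 1
    simp only [Finsupp.tsub_apply, Finsupp.single_eq_same]
    push_cast
    ring

theorem eval_mderiv_monomial (q : Fin 3 → ℂ) (ν : Fin 3 → ℕ) (s : Fin 3 →₀ ℕ) (a : ℂ) :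
    eval q (mderiv ν (monomial s a)) = a * derivValue q ν s := by
  simp only [mderiv, LinearMap.comp_apply, pderiv_pow_monomial, eval_monomial]
  rw [Finsupp.prod_fintype _ _ (by simp), Fin.prod_univ_three]
  simp [derivValue, descProd]
  ring

theorem pderiv_comm (i j : Fin 3) (f : MvPolynomial (Fin 3) ℂ) :
    pderiv i (pderiv j f) = pderiv j (pderiv i f) := by
  induction f using MvPolynomial.induction_on' with
  | add p q hp hq => simp [hp, hq]
  | monomial s a =>
    simp only [pderiv_monomial, tsub_tsub, add_comm (Finsupp.single i 1)]
    congr 1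
    by_cases h : i = j
    · subst h; rfl
    · simp [Finsupp.single_eq_of_ne h, Finsupp.single_eq_of_ne (Ne.symm h)]
      ring

theorem mderiv_eq_mul (ν : Fin 3 → ℕ) :
    mderiv ν = (pderiv (R := ℂ) (0 : Fin 3)).toLinearMap ^ ν 0 *
      ((pderiv (R := ℂ) (1 : Fin 3)).toLinearMap ^ ν 1 *
        (pderiv (R := ℂ) (2 : Fin 3)).toLinearMap ^ ν 2) := rfl

theorem pderiv_mderiv (j : Fin 3) (ν : Fin 3 → ℕ) (f : MvPolynomial (Fin 3) ℂ) :
    pderiv j (mderiv ν f) = mderiv (ν + Pi.single j 1) f := by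
  have hc (i j : Fin 3) : Commute (pderiv (R := ℂ) i).toLinearMap (pderiv (R := ℂ) j).toLinearMap :=
    LinearMap.ext (pderiv_comm i j)
  have key : (pderiv (R := ℂ) j).toLinearMap * mderiv ν = mderiv (ν + Pi.single j 1) := by
    rw [mderiv_eq_mul, mderiv_eq_mul]
    fin_cases j
    · simp [pow_succ', mul_assoc]
    · simp only [Fin.mk_one, Pi.add_apply]
      rw [← mul_assoc, ((hc 1 0).pow_right _).eq]
      simp [pow_succ', mul_assoc]
    · simp only [Fin.reduceFinMk, Pi.add_apply]
      rw [← mul_assoc, ((hc 2 0).pow_right _).eq, mul_assoc, ← mul_assoc _ (_ ^ ν 1),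
        ((hc 2 1).pow_right _).eq]
      simp [pow_succ', mul_assoc]
  exact LinearMap.congr_fun key f

theorem isHomogeneous_mderiv {n : ℕ} {f : MvPolynomial (Fin 3) ℂ} (hf : f.IsHomogeneous n)
    (ν : Fin 3 → ℕ) : (mderiv ν f).IsHomogeneous (n - (ν 0 + ν 1 + ν 2)) := by
  have step (j : Fin 3) (l n : ℕ) (g : MvPolynomial (Fin 3) ℂ) (hg : g.IsHomogeneous n) :
      (((pderiv (R := ℂ) j).toLinearMap ^ l) g).IsHomogeneous (n - l) := by
    induction l with
    | zero => simpa
    | succ l ih =>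
      rw [pow_succ', Module.End.mul_apply, ← Nat.sub_sub]
      exact ih.pderiv
  have := step 0 (ν 0) _ _ (step 1 (ν 1) _ _ (step 2 (ν 2) _ _ hf))
  rwa [Nat.sub_sub, Nat.sub_sub, show ν 2 + (ν 1 + ν 0) = ν 0 + ν 1 + ν 2 by ring] at this

/-- By Euler's identity, vanishing of all derivatives of order `e` of a form of degree `n ≥ e`
forces vanishing of all derivatives of lower order. -/
theorem eval_mderiv_eq_zero_of_top {n e : ℕ} (he : e ≤ n) {f : MvPolynomial (Fin 3) ℂ}
    (hf : f.IsHomogeneous n) (q : Fin 3 → ℂ)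
    (h : ∀ ν : Fin 3 → ℕ, ν 0 + ν 1 + ν 2 = e → eval q (mderiv ν f) = 0)
    (ν : Fin 3 → ℕ) (hν : ν 0 + ν 1 + ν 2 ≤ e) : eval q (mderiv ν f) = 0 := by
  obtain ⟨t, ht⟩ := Nat.exists_eq_add_of_le hν
  induction t generalizing ν with
  | zero => exact h ν (by omega)
  | succ t ih =>
    have euler := congrArg (eval q) (isHomogeneous_mderiv hf ν).sum_X_mul_pderiv
    have hz (j : Fin 3) : eval q (pderiv j (mderiv ν f)) = 0 := by
      rw [pderiv_mderiv]
      apply ih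
      all_goals fin_cases j <;> simp <;> omega
    simp only [map_sum, map_mul, hz, mul_zero, Finset.sum_const_zero, nsmul_eq_mul, map_natCast] at euler
    exact (mul_eq_zero.1 euler.symm).resolve_left (Nat.cast_ne_zero.2 (by omega))

/-- The matrix of the conditions imposed by the points `q i` with multiplicities `m i`. -/
noncomputable def condMatrix {A : Type*} [CommSemiring A] {k : ℕ} (q : Fin k → Fin 3 → A) (d : ℕ)
    (m : Fin k → ℕ) : Matrix (Cond m) (Mono d) A :=
  Matrix.of fun r α => derivValue (q r.1) r.2 α

/-- The form with given coefficients. -/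
noncomputable def ofCoeffs (d : ℕ) : (Mono d → ℂ) →ₗ[ℂ] MvPolynomial (Fin 3) ℂ :=
  Fintype.linearCombination ℂ fun α : Mono d => monomial (Finsupp.equivFunOnFinite.symm α.1) (1 : ℂ)

theorem ofCoeffs_apply {d : ℕ} (c : Mono d → ℂ) :
    ofCoeffs d c = ∑ α, monomial (Finsupp.equivFunOnFinite.symm α.1) (c α) := by
  simp [ofCoeffs, Fintype.linearCombination_apply, smul_monomial]

theorem coeff_ofCoeffs {d : ℕ} (c : Mono d → ℂ) (α : Mono d) :
    coeff (Finsupp.equivFunOnFinite.symm α.1) (ofCoeffs d c) = c α := by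
  rw [ofCoeffs_apply, coeff_sum, Finset.sum_eq_single α]
  · simp
  · intro β _ hβ
    rw [coeff_monomial, if_neg]
    exact fun h => hβ (Subtype.ext (Finsupp.equivFunOnFinite.symm.injective h))
  · simp

theorem ofCoeffs_injective (d : ℕ) : Function.Injective (ofCoeffs d) := fun c c' h =>
  funext fun α => by rw [← coeff_ofCoeffs c, h, coeff_ofCoeffs]

theorem isHomogeneous_ofCoeffs {d : ℕ} (c : Mono d → ℂ) : (ofCoeffs d c).IsHomogeneous d := by
  rw [ofCoeffs_apply]
  refine IsHomogeneous.sum _ _ _ fun α _ => isHomogeneous_monomial _ ?_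
  rw [Finsupp.degree_eq_sum, Fin.sum_univ_three]
  exact α.sum_eq

theorem exists_ofCoeffs_eq {d : ℕ} {f : MvPolynomial (Fin 3) ℂ} (hf : f.IsHomogeneous d) :
    ∃ c, ofCoeffs d c = f := by
  refine ⟨fun α => coeff (Finsupp.equivFunOnFinite.symm α.1) f, ?_⟩
  ext s
  by_cases hs : s.degree = d
  · have : (s : Fin 3 → ℕ) ∈ Finset.Nat.antidiagonalTuple 3 d := by
      rw [Finset.Nat.mem_antidiagonalTuple, ← hs, Finsupp.degree_eq_sum]
    have h := coeff_ofCoeffs (fun α : Mono d => coeff (Finsupp.equivFunOnFinite.symm α.1) f)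
      ⟨s, this⟩
    simpa using h
  · rw [(isHomogeneous_ofCoeffs _).coeff_eq_zero hs, hf.coeff_eq_zero hs]

theorem eval_mderiv_ofCoeffs {d k : ℕ} (q : Fin k → Fin 3 → ℂ) (m : Fin k → ℕ) (c : Mono d → ℂ)
    (r : Cond m) :
    eval (q r.1) (mderiv r.2 (ofCoeffs d c)) = (condMatrix q d m).mulVec c r := by
  rw [ofCoeffs_apply, map_sum, map_sum]
  refine Finset.sum_congr rfl fun α _ => ?_
  rw [eval_mderiv_monomial]
  simp [condMatrix, mul_comm]

theorem linSys_eq_map_ker {k : ℕ} (q : Fin k → Fin 3 → ℂ) {d : ℕ} {m : Fin k → ℕ}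
    (hm : ∀ i, 1 ≤ m i ∧ m i ≤ d + 1) :
    linSys q d m = (LinearMap.ker (condMatrix q d m).mulVecLin).map (ofCoeffs d) := by
  ext f
  simp only [linSys, Submodule.mem_inf, mem_homogeneousSubmodule, Submodule.mem_iInf,
    LinearMap.mem_ker, Submodule.mem_map, LinearMap.comp_apply, Matrix.mulVecLin_apply]
  constructor
  · rintro ⟨hf, h⟩
    obtain ⟨c, rfl⟩ := exists_ofCoeffs_eq hf
    refine ⟨c, funext fun r => ?_, rfl⟩
    rw [← eval_mderiv_ofCoeffs]
    refine h r.1 r.2 ?_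
    have := r.2.sum_eq
    have := (hm r.1).1
    omega
  · rintro ⟨c, hc, rfl⟩
    refine ⟨isHomogeneous_ofCoeffs c, fun i ν hν => ?_⟩
    have := hm i
    refine eval_mderiv_eq_zero_of_top (e := m i - 1) (by omega) (isHomogeneous_ofCoeffs c) (q i) ?_ ν
      (by omega)
    intro μ hμ
    have := eval_mderiv_ofCoeffs q m c
      ⟨i, μ, Finset.Nat.mem_antidiagonalTuple.2 (by rwa [Fin.sum_univ_three])⟩
    rw [this, hc, Pi.zero_apply]

theorem finrank_linSys_add_card {k : ℕ} {q : Fin k → Fin 3 → ℂ} {d : ℕ} {m : Fin k → ℕ}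
    (hm : ∀ i, 1 ≤ m i ∧ m i ≤ d + 1) (Y : Matrix (Mono d) (Cond m) ℂ)
    (hY : (condMatrix q d m * Y).det ≠ 0) :
    Module.finrank ℂ (linSys q d m) + Fintype.card (Cond m) = Fintype.card (Mono d) := by
  rw [linSys_eq_map_ker q hm, LinearEquiv.finrank_eq
    (Submodule.equivMapOfInjective _ (ofCoeffs_injective d) _).symm]
  have hsurj : Function.Surjective (condMatrix q d m).mulVecLin := by
    intro b
    refine ⟨Y.mulVec ((condMatrix q d m * Y)⁻¹.mulVec b), ?_⟩
    rw [Matrix.mulVecLin_apply, Matrix.mulVec_mulVec, Matrix.mulVec_mulVec,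
      Matrix.mul_nonsing_inv _ (isUnit_iff_ne_zero.2 hY), Matrix.one_mulVec]
  have h := LinearMap.finrank_range_add_finrank_ker (condMatrix q d m).mulVecLin
  rw [LinearMap.range_eq_top.2 hsurj, finrank_top, Module.finrank_fintype_fun_eq_card,
    Module.finrank_fintype_fun_eq_card] at h
  omega

theorem generically_finrank {k : ℕ} {q : Fin k → Fin 3 → ℂ} {d : ℕ} {m : Fin k → ℕ}
    (hm : ∀ i, 1 ≤ m i ∧ m i ≤ d + 1) (Y : Matrix (Mono d) (Cond m) ℂ)
    (hY : (condMatrix q d m * Y).det ≠ 0) :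
    Generically k fun p =>
      Module.finrank ℂ (linSys p d m) + Fintype.card (Cond m) = Fintype.card (Mono d) := by
  let A : Matrix (Cond m) (Mono d) (MvPolynomial (Fin k × Fin 3) ℂ) :=
    condMatrix (fun i j => X (i, j)) d m
  let B : Matrix (Mono d) (Cond m) (MvPolynomial (Fin k × Fin 3) ℂ) := Y.map C
  obtain ⟨N, hN⟩ : ∃ N, N = A * B := ⟨_, rfl⟩
  have hP (p : Fin k → Fin 3 → ℂ) :
      eval (fun x => p x.1 x.2) N.det = (condMatrix p d m * Y).det := by
    have hpN : (eval fun x : Fin k × Fin 3 => p x.1 x.2).mapMatrix N = condMatrix p d m * Y := by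
      ext r s
      rw [RingHom.mapMatrix_apply, Matrix.map_apply, hN, Matrix.mul_apply, Matrix.mul_apply, map_sum]
      simp [A, B, condMatrix, derivValue]
    rw [← hpN]
    exact RingHom.map_det _ N
  refine ⟨N.det, fun h => hY ?_, fun p _ hp => finrank_linSys_add_card hm Y (by rwa [← hP])⟩
  rw [← hP, h, map_zero]

/-- One step of fraction-free elimination modulo `p`: clear the head of `u` with the pivot `v`. -/
def eliminate (p : ℕ) (v u : List ℕ) : List ℕ :=
  if u.headD 0 = 0 then u.tail
  else List.zipWith (fun a b => (v.headD 0 * a + (p - 1) * u.headD 0 * b) % p) u.tail v.tail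

/-- Whether the vectors in the list span the space of vectors of length `n` modulo `p`. -/
def hasFullRank (p : ℕ) : ℕ → List (List ℕ) → Bool
  | 0, _ => true
  | n + 1, L =>
    match L.find? (fun v => v.headD 0 % p != 0) with
    | none => false
    | some v => hasFullRank p n (L.map (eliminate p v))

/-- The standard pairing modulo `p`. -/
def pairing {p : ℕ} : List (ZMod p) → List ℕ → ZMod p
  | a :: μ, x :: u => a * x + pairing μ u
  | _, _ => 0

theorem pairing_zipWith {p : ℕ} (hp : 1 ≤ p) (x y : ℕ) (μ : List (ZMod p)) (u v : List ℕ)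
    (h : u.length = v.length) :
    pairing μ (List.zipWith (fun a b => (x * a + (p - 1) * y * b) % p) u v) =
      x * pairing μ u - y * pairing μ v := by
  induction μ generalizing u v with
  | nil => simp [pairing]
  | cons a μ ih =>
    match u, v, h with
    | [], [], _ => simp [pairing]
    | b :: u, c :: v, h =>
      simp only [List.zipWith_cons_cons, pairing, ih u v (by simpa using h), ZMod.natCast_mod]
      push_cast [hp]
      simp
      ring

theorem eq_zero_of_hasFullRank {p : ℕ} [Fact p.Prime] (n : ℕ) (L : List (List ℕ))
    (hL : ∀ v ∈ L, v.length = n) (h : hasFullRank p n L = true) (μ : List (ZMod p))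
    (hμ : μ.length = n) (h0 : ∀ v ∈ L, pairing μ v = 0) : ∀ a ∈ μ, a = 0 := by
  induction n generalizing L μ with
  | zero => simp [List.length_eq_zero_iff.1 hμ]
  | succ n ih =>
    have hp : 1 ≤ p := (Fact.out : p.Prime).one_le
    obtain ⟨a, μ, rfl⟩ : ∃ a μ', μ = a :: μ' := List.exists_cons_of_length_eq_add_one hμ
    rw [hasFullRank] at h
    split at h
    · simp at h
    · rename_i v hv
      have hvL := List.mem_of_find?_eq_some hv
      have hvp := List.find?_some hv
      obtain ⟨x, t, rfl⟩ : ∃ x t, v = x :: t := List.exists_cons_of_length_eq_add_one (hL v hvL)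
      have hx : (x : ZMod p) ≠ 0 := by
        rw [Ne, ZMod.natCast_eq_zero_iff]
        intro hdvd
        simp [Nat.mod_eq_zero_of_dvd hdvd] at hvp
      have hxt : a * x + pairing μ t = 0 := h0 _ hvL
      have ht : t.length = n := by simpa using hL _ hvL
      have hμ0 : ∀ b ∈ μ, b = 0 := by
        refine ih _ ?_ h μ (by simpa using hμ) ?_
        · intro w hw
          obtain ⟨u, hu, rfl⟩ := List.mem_map.1 hw
          obtain ⟨y, s, rfl⟩ : ∃ y s, u = y :: s := List.exists_cons_of_length_eq_add_one (hL u hu)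
          have hs : s.length = n := by simpa using hL _ hu
          unfold eliminate
          split <;> simp [ht, hs]
        · intro w hw
          obtain ⟨u, hu, rfl⟩ := List.mem_map.1 hw
          obtain ⟨y, s, rfl⟩ : ∃ y s, u = y :: s := List.exists_cons_of_length_eq_add_one (hL u hu)
          have hs : s.length = n := by simpa using hL _ hu
          have hys : a * y + pairing μ s = 0 := h0 _ hu
          unfold eliminate
          split
          · rename_i hy
            have hy : y = 0 := by simpa using hy
            simpa [hy] using hys
          · simp only [List.headD_cons, List.tail_cons]
            rw [pairing_zipWith hp _ _ _ _ _ (hs.trans ht.symm)]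
            linear_combination (x : ZMod p) * hys - (y : ZMod p) * hxt
      have hpair : pairing μ t = 0 := by
        have aux (μ : List (ZMod p)) (t : List ℕ) (h : ∀ b ∈ μ, b = 0) : pairing μ t = 0 := by
          induction μ generalizing t with
          | nil => simp [pairing]
          | cons b μ ih =>
            cases t with
            | nil => rfl
            | cons c t =>
              simp only [List.mem_cons, forall_eq_or_imp] at h
              rw [pairing, h.1, ih t h.2, zero_mul, zero_add]
        exact aux μ t hμ0
      rw [hpair, add_zero] at hxt
      simp only [List.mem_cons, forall_eq_or_imp]
      exact ⟨(mul_eq_zero.1 hxt).resolve_right hx, hμ0⟩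

theorem pairing_map {p : ℕ} {ι : Type*} (l : List ι) (f : ι → ZMod p) (g : ι → ℕ) :
    pairing (l.map f) (l.map g) = (l.map fun x => f x * g x).sum := by
  induction l with
  | nil => rfl
  | cons x l ih => simp [pairing, ih]

/-- The monomials of degree `d` at which the `i`-th weight is strictly smaller than the others. -/
def cell {k : ℕ} (w : Fin k → Fin 3 → ℕ) (d : ℕ) (i : Fin k) : List (Fin 3 → ℕ) :=
  (List.Nat.antidiagonalTuple 3 d).filter fun α =>
    (List.finRange k).all fun j => i == j || (weight (w i) α).blt (weight (w j) α)

/-- Whether the `i`-th cell imposes the maximal number of conditions, modulo `p`, on polynomials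
of degree less than `m i`. -/
def isUnisolvent {k : ℕ} (p : ℕ) (w : Fin k → Fin 3 → ℕ) (d : ℕ) (m : Fin k → ℕ) (i : Fin k) :
    Bool :=
  hasFullRank p (List.Nat.antidiagonalTuple 3 (m i - 1)).length
    ((cell w d i).map fun α =>
      (List.Nat.antidiagonalTuple 3 (m i - 1)).map fun ν => descProd α ν % p)

theorem mem_cell {k : ℕ} {w : Fin k → Fin 3 → ℕ} {d : ℕ} {i : Fin k} {α : Fin 3 → ℕ} :
    α ∈ cell w d i ↔ α ∈ Finset.Nat.antidiagonalTuple 3 d ∧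
      ∀ j, i ≠ j → weight (w i) α < weight (w j) α := by
  simp only [cell, List.mem_filter, List.Nat.mem_antidiagonalTuple,
    Finset.Nat.mem_antidiagonalTuple, List.all_eq_true, List.mem_finRange, forall_const,
    Bool.or_eq_true, beq_iff_eq, Nat.blt_eq, or_iff_not_imp_left, ne_eq]

theorem sum_mono {M : Type*} [AddCommMonoid M] (d : ℕ) (f : (Fin 3 → ℕ) → M) :
    ∑ α : Mono d, f α = ((List.Nat.antidiagonalTuple 3 d).map f).sum := by
  rw [Finset.sum_coe_sort (Finset.Nat.antidiagonalTuple 3 d) f]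
  rfl

theorem eq_zero_of_isUnisolvent {k : ℕ} {p : ℕ} [Fact p.Prime] {w : Fin k → Fin 3 → ℕ} {d : ℕ}
    {m : Fin k → ℕ} {i : Fin k} (h : isUnisolvent p w d m i = true) (μ : Mono (m i - 1) → ZMod p)
    (h0 : ∀ α ∈ cell w d i, ∑ ν, μ ν * (descProd α ν : ZMod p) = 0) : μ = 0 := by
  classical
  obtain ⟨μ', rfl⟩ : ∃ μ' : (Fin 3 → ℕ) → ZMod p, (fun ν => μ' ν.1) = μ :=
    ⟨fun ν => if hν : ν ∈ Finset.Nat.antidiagonalTuple 3 (m i - 1) then μ ⟨ν, hν⟩ else 0,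
      funext fun ν => by simp⟩
  have := eq_zero_of_hasFullRank _ _ (by simp) h
    ((List.Nat.antidiagonalTuple 3 (m i - 1)).map μ') (by simp) ?_
  · ext ν
    exact this _ (List.mem_map_of_mem ν.2)
  · intro v hv
    obtain ⟨α, hα, rfl⟩ := List.mem_map.1 hv
    rw [pairing_map, ← h0 α hα, sum_mono (m i - 1) fun ν => μ' ν * (descProd α ν : ZMod p)]
    simp

/-- An integer matrix whose reduction modulo a prime has independent rows has independent rows. -/
theorem exists_det_mul_ne_zero {R S : Type*} [Fintype R] [DecidableEq R] [Fintype S]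
    (p : ℕ) [Fact p.Prime] (B : Matrix R S ℤ)
    (h : ∀ v : R → ZMod p, Matrix.vecMul v (B.map (Int.cast : ℤ → ZMod p)) = 0 → v = 0) :
    ∃ Y : Matrix S R ℤ, (B * Y).det ≠ 0 := by
  classical
  have hinj : Function.Injective (B.map (Int.cast : ℤ → ZMod p)).transpose.mulVecLin := by
    rw [← LinearMap.ker_eq_bot, LinearMap.ker_eq_bot']
    intro v hv
    exact h v (by simpa [Matrix.mulVec_transpose] using hv)
  obtain ⟨g, hg⟩ := LinearMap.exists_leftInverse_of_injective _ (LinearMap.ker_eq_bot.2 hinj)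
  have hX : (B.map (Int.cast : ℤ → ZMod p)) * (LinearMap.toMatrix' g).transpose = 1 := by
    rw [← Matrix.transpose_inj, Matrix.transpose_mul, Matrix.transpose_transpose,
      Matrix.transpose_one, ← LinearMap.toMatrix'_id, ← hg, LinearMap.toMatrix'_comp]
    congr 1
    exact (LinearMap.toMatrix'_toLin' _).symm
  obtain ⟨Y, hY⟩ : ∃ Y : Matrix S R ℤ, Y.map (Int.cast : ℤ → ZMod p) =
      (LinearMap.toMatrix' g).transpose := by
    choose Y hY using fun s r => ZMod.intCast_surjective ((LinearMap.toMatrix' g).transpose s r)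
    exact ⟨Matrix.of Y, by ext s r; exact hY s r⟩
  refine ⟨Y, fun hdet => one_ne_zero (α := ZMod p) ?_⟩
  have hmap : (B * Y).map (Int.castRingHom (ZMod p)) = 1 := by
    rw [Matrix.map_mul]
    exact hY ▸ hX
  have := RingHom.map_det (Int.castRingHom (ZMod p)) (B * Y)
  rw [RingHom.mapMatrix_apply, hmap, hdet, Matrix.det_one, map_zero] at this
  exact this.symm

theorem exists_det_condMatrix_ne_zero {k : ℕ} [NeZero k] (p : ℕ) [Fact p.Prime]
    (w : Fin k → Fin 3 → ℕ) (d : ℕ) (m : Fin k → ℕ) (h : ∀ i, isUnisolvent p w d m i = true) :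
    ∃ Y : Matrix (Mono d) (Cond m) ℂ,
      (condMatrix (fun i j => (p : ℂ) ^ w i j) d m * Y).det ≠ 0 := by
  have hp0 : (p : ℂ) ≠ 0 := Nat.cast_ne_zero.2 (Fact.out : p.Prime).ne_zero
  let e (α : Fin 3 → ℕ) : ℕ := Finset.univ.inf' Finset.univ_nonempty fun i => weight (w i) α
  have he (i : Fin k) (α : Fin 3 → ℕ) : e α ≤ weight (w i) α :=
    Finset.inf'_le _ (Finset.mem_univ i)
  let B : Matrix (Cond m) (Mono d) ℤ :=
    Matrix.of fun r α => descProd α r.2 * (p : ℤ) ^ (weight (w r.1) α - e α)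
  obtain ⟨Y, hY⟩ := exists_det_mul_ne_zero p B fun v hv => by
    have key (i : Fin k) : (fun ν => v ⟨i, ν⟩) = 0 := by
      refine eq_zero_of_isUnisolvent (h i) _ fun α hα => ?_
      obtain ⟨hαd, hlt⟩ := mem_cell.1 hα
      have hei : e α = weight (w i) α := by
        refine le_antisymm (he i α) (Finset.le_inf' _ _ fun j _ => ?_)
        by_cases hij : i = j
        · rw [hij]
        · exact (hlt j hij).le
      have hcol := congrFun hv ⟨α, hαd⟩
      simp only [Matrix.vecMul, dotProduct, Pi.zero_apply] at hcol
      rw [Fintype.sum_sigma, Finset.sum_eq_single i] at hcol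
      · simpa [B, hei] using hcol
      · intro j _ hj
        have : weight (w j) α - e α ≠ 0 := by
          have := hlt j hj.symm
          omega
        simp [B, this]
      · simp
    exact funext fun r => congrFun (key r.1) r.2
  let a : Cond m → ℂ := fun r => (p : ℂ) ^ weight (w r.1) r.2
  let b : Mono d → ℂ := fun α => (p : ℂ) ^ e α
  have hb (α : Mono d) : b α ≠ 0 := pow_ne_zero _ hp0
  have hscale : Matrix.diagonal a * condMatrix (fun i j => (p : ℂ) ^ w i j) d m =
      B.map (Int.cast : ℤ → ℂ) * Matrix.diagonal b := by
    ext ⟨i, ν⟩ α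
    simp only [Matrix.diagonal_mul, Matrix.mul_diagonal, condMatrix, Matrix.of_apply,
      Matrix.map_apply, derivValue, a, b, B]
    push_cast
    rw [mul_assoc (descProd α.1 ν.1 : ℂ), ← pow_add, Nat.sub_add_cancel (he i α)]
    by_cases hle : ν.1 0 ≤ α.1 0 ∧ ν.1 1 ≤ α.1 1 ∧ ν.1 2 ≤ α.1 2
    · obtain ⟨h0, h1, h2⟩ := hle
      simp only [← pow_mul, ← pow_add, mul_left_comm _ (descProd α.1 ν.1 : ℂ)]
      congr 2
      simp only [weight]
      zify [h0, h1, h2]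
      ring
    · have : descProd α.1 ν.1 = 0 := by
        simp only [descProd, mul_eq_zero, Nat.descFactorial_eq_zero_iff_lt]
        omega
      simp [this]
  refine ⟨Matrix.diagonal b⁻¹ * Y.map (Int.cast : ℤ → ℂ), fun hdet => hY ?_⟩
  have hbb : Matrix.diagonal b * Matrix.diagonal b⁻¹ = 1 := by
    rw [Matrix.diagonal_mul_diagonal, ← Matrix.diagonal_one]
    congr 1
    exact funext fun α => mul_inv_cancel₀ (hb α)
  have hprod : (B * Y).map (Int.castRingHom ℂ) = Matrix.diagonal a *
      (condMatrix (fun i j => (p : ℂ) ^ w i j) d m *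
        (Matrix.diagonal b⁻¹ * Y.map (Int.cast : ℤ → ℂ))) := by
    rw [← Matrix.mul_assoc, hscale, Matrix.mul_assoc, ← Matrix.mul_assoc (Matrix.diagonal b), hbb,
      Matrix.one_mul, Matrix.map_mul]
    rfl
  have hmap := RingHom.map_det (Int.castRingHom ℂ) (B * Y)
  rw [RingHom.mapMatrix_apply, hprod, Matrix.det_mul, hdet, mul_zero] at hmap
  simpa using hmap

theorem generically_projDim {k : ℕ} [NeZero k] (p : ℕ) [Fact p.Prime] (w : Fin k → Fin 3 → ℕ)
    {d : ℕ} {m : Fin k → ℕ} (hm : ∀ i, 1 ≤ m i ∧ m i ≤ d + 1)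
    (h : ∀ i, isUnisolvent p w d m i = true) {v : ℕ}
    (hv : (Finset.Nat.antidiagonalTuple 3 d).card =
      ∑ i, (Finset.Nat.antidiagonalTuple 3 (m i - 1)).card + (v + 1)) :
    Generically k fun q => projDim q d m = v := by
  obtain ⟨Y, hY⟩ := exists_det_condMatrix_ne_zero p w d m h
  obtain ⟨P, hP, hgen⟩ := generically_finrank hm Y hY
  refine ⟨P, hP, fun q hq hPq => ?_⟩
  have := hgen q hq hPq
  simp only [Fintype.card_sigma, Fintype.card_coe] at this
  unfold projDim
  omega

end InterpolationMatrix


theorem nonspecial_systems_dim_eq_virtual :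
    (virtDim 15 (qh 6 3) = 3 ∧
      Generically 7 (fun p => projDim p 15 (qh 6 3) = 3)) ∧
    (virtDim 16 (qh 7 2) = 2 ∧
      Generically 8 (fun p => projDim p 16 (qh 7 2) = 2)) ∧
    (virtDim 17 (qh 8 1) = 1 ∧
      Generically 9 (fun p => projDim p 17 (qh 8 1) = 1)) ∧
    (virtDim 19 (qh 9 5) = 5 ∧
      Generically 10 (fun p => projDim p 19 (qh 9 5) = 5)) ∧
    (virtDim 20 (qh 9 8) = 5 ∧
      Generically 10 (fun p => projDim p 20 (qh 9 8) = 5)) := by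
  have : Fact (Nat.Prime 29) := ⟨by norm_num⟩
  refine ⟨⟨by decide +kernel, ?_⟩, ⟨by decide +kernel, ?_⟩, ⟨by decide +kernel, ?_⟩,
    ⟨by decide +kernel, ?_⟩, ⟨by decide +kernel, ?_⟩⟩
  · exact InterpolationMatrix.generically_projDim (v := 3) 29
      ![![814, 1879, 0], ![342, 0, 1376], ![173, 85, 1235], ![550, 1637, 41], ![138, 408, 662],
        ![0, 564, 704], ![34, 537, 637]]
      (by decide +kernel) (by decide +kernel) (by decide +kernel)
  · exact InterpolationMatrix.generically_projDim (v := 2) 29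
      ![![1911, 3961, 0], ![0, 4476, 372], ![86, 4324, 198], ![357, 3804, 111], ![2695, 210, 487],
        ![2646, 50, 648], ![2344, 0, 1000], ![2249, 39, 1056]]
      (by decide +kernel) (by decide +kernel) (by decide +kernel)
  · exact InterpolationMatrix.generically_projDim (v := 1) 29
      ![![1750, 2616, 0], ![1024, 0, 1846], ![806, 97, 1644], ![1207, 2410, 1], ![0, 1978, 2065],
        ![837, 1932, 203], ![609, 1158, 627], ![758, 355, 1094], ![686, 344, 1160]]
      (by decide +kernel) (by decide +kernel) (by decide +kernel)
  · exact InterpolationMatrix.generically_projDim (v := 5) 29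
      ![![3073, 2107, 0], ![2775, 1760, 94], ![550, 1306, 892], ![856, 0, 2481], ![0, 1349, 2178],
        ![406, 1002, 1093], ![316, 676, 1395], ![525, 119, 2180], ![378, 323, 1762],
        ![421, 328, 1695]]
      (by decide +kernel) (by decide +kernel) (by decide +kernel)
  · exact InterpolationMatrix.generically_projDim (v := 5) 29
      ![![2783, 0, 6731], ![0, 5229, 6825], ![9682, 5132, 0], ![9363, 4768, 123],
        ![1376, 4008, 3030], ![1168, 3561, 3345], ![1725, 589, 5940], ![1279, 1425, 4590],
        ![1596, 1274, 4404], ![1388, 1384, 4422]]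
      (by decide +kernel) (by decide +kernel) (by decide +kernel)
end
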